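/- arXiv:1601.01650 — 2 statements merged into one kernel-verified Lean document; each statement's English description precedes it below -/
import Mathlib

section
/- Fix real α, β > −1, j ∈ ℕ, γ ∈ ℝ, M > 0, and a sequence M_n ≥ 0 with lim_{n→∞} M_n n^γ = M. Then lim_{n→∞} (Q_n, Q_n)_{S,n} / ‖P_n^{(α,β)}‖² = 1. -/
open Polynomial Filter

/-- The Jacobi polynomial `P_n^{(α,β)}` as a real polynomial. -/
noncomputable def jacobiP (α β : ℝ) (n : ℕ) : Polynomial ℝ :=
  ∑ k ∈ Finset.range (n + 1),
    Polynomial.C (Real.Gamma (n + α + 1) / (Real.Gamma ((n : ℝ) - k + 1) * Real.Gamma (α + k + 1)) *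
        (Real.Gamma (n + β + 1) / (Real.Gamma ((k : ℝ) + 1) * Real.Gamma ((n : ℝ) - k + β + 1)))) *
      (Polynomial.C (2⁻¹ : ℝ) * (Polynomial.X - 1)) ^ k *
      (Polynomial.C (2⁻¹ : ℝ) * (Polynomial.X + 1)) ^ (n - k)

/-- The squared Jacobi norm `‖P_n^{(α,β)}‖²`. -/
noncomputable def jacobiNormSq (α β : ℝ) (n : ℕ) : ℝ :=
  ∫ x in (-1 : ℝ)..1, (jacobiP α β n).eval x ^ 2 * (1 - x) ^ α * (1 + x) ^ β

/-- The kernel `K_n^{(j,k)}(x,y)`. -/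
noncomputable def kernK (α β : ℝ) (j k n : ℕ) (x y : ℝ) : ℝ :=
  ∑ i ∈ Finset.range (n + 1),
    (Polynomial.derivative^[j] (jacobiP α β i)).eval x *
      (Polynomial.derivative^[k] (jacobiP α β i)).eval y / jacobiNormSq α β i

/-- The kernel `K_n^{(j,0)}(1,·)` as a polynomial. -/
noncomputable def kernKPoly (α β : ℝ) (j n : ℕ) : Polynomial ℝ :=
  ∑ i ∈ Finset.range (n + 1),
    Polynomial.C ((Polynomial.derivative^[j] (jacobiP α β i)).eval 1 / jacobiNormSq α β i) *
      jacobiP α β i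

/-- The varying Sobolev inner product `(f,g)_{S,n}` with mass `m`. -/
noncomputable def sobInner (α β : ℝ) (j : ℕ) (m : ℝ) (f g : Polynomial ℝ) : ℝ :=
  (∫ x in (-1 : ℝ)..1, f.eval x * g.eval x * (1 - x) ^ α * (1 + x) ^ β) +
    m * (Polynomial.derivative^[j] f).eval 1 * (Polynomial.derivative^[j] g).eval 1

/-- The Jacobi–Sobolev orthogonal polynomial `Q_n`. -/
noncomputable def sobQ (α β : ℝ) (j : ℕ) (Ms : ℕ → ℝ) (n : ℕ) : Polynomial ℝ :=
  jacobiP α β n -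
    Polynomial.C (Ms n * (Polynomial.derivative^[j] (jacobiP α β n)).eval 1 /
        (1 + Ms n * kernK α β j j (n - 1) 1 1)) *
      kernKPoly α β j (n - 1)

/-!
The kernel `K_{n-1}^{(j,0)}(1,·)` represents `f ↦ f^{(j)}(1)` on polynomials of degree less than
`n`, and `P_n` is orthogonal to it. Hence
`(Q_n,Q_n)_{S,n} / ‖P_n‖² = 1 + M_n b_n / (1 + M_n ∑_{i<n} b_i)` with
`b_i = P_i^{(j)}(1)² / ‖P_i‖²`, and the last term is at most `b_n / ∑_{i<n} b_i`. Differentiation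
and its adjoint, the raising operator, move between the parameters `(α, β)` and `(α + 1, β + 1)`;
by induction this yields two-term recurrences in `n` for `P_n^{(j)}(1)` and for `‖P_n‖²`. They give
`b_{n+1} ~ b_n`, so that `b_n = o(∑_{i<n} b_i)`.
-/

section Asymptotics

open Asymptotics

theorem isEquivalent_of_mul_eq_mul {ι 𝕜 : Type*} [NormedField 𝕜] {l : Filter ι}
    {u v a b : ι → 𝕜} (hab : a ~[l] b) (ha : ∀ᶠ i in l, a i ≠ 0)
    (h : ∀ᶠ i in l, u i * a i = v i * b i) : u ~[l] v := by
  refine isEquivalent_iff_exists_eq_mul.mpr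
    ⟨b / a, (isEquivalent_iff_tendsto_one ha).mp hab.symm, ?_⟩
  filter_upwards [ha, h] with i hai hi
  rw [Pi.mul_apply, Pi.div_apply, div_mul_eq_mul_div, eq_div_iff hai, hi, mul_comm]

theorem isEquivalent_natCast_add_const (x y : ℝ) :
    (fun n : ℕ => (n : ℝ) + x) ~[atTop] fun n => (n : ℝ) + y := by
  have add_const (z : ℝ) : (fun n : ℕ => (n : ℝ) + z) ~[atTop] fun n => (n : ℝ) :=
    IsEquivalent.refl.add_isLittleO (isLittleO_const_left.mpr (.inr
      (tendsto_norm_atTop_atTop.comp tendsto_natCast_atTop_atTop)))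
  exact (add_const x).trans (add_const y).symm

theorem isLittleO_sum_range_of_isEquivalent_succ {b : ℕ → ℝ} (hb : ∀ n, 0 ≤ b n)
    (hsucc : (fun n => b (n + 1)) ~[atTop] b) :
    b =o[atTop] fun n => ∑ i ∈ Finset.range n, b i := by
  by_cases hsum : Summable b
  · have hlim := hsum.hasSum.tendsto_sum_nat
    rcases eq_or_ne (∑' n, b n) 0 with h0 | h0
    · rw [(hasSum_zero_iff_of_nonneg hb).mp (h0 ▸ hsum.hasSum)]
      exact isLittleO_zero _ _
    · exact ((isLittleO_const_iff h0).mpr hsum.tendsto_atTop_zero).trans_isBigO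
        ((isEquivalent_const_iff_tendsto h0).mpr hlim).isBigO_symm
  · have hlim := (not_summable_iff_tendsto_nat_atTop_of_nonneg hb).mp hsum
    have hdiff : (fun n => b n - b 0) =o[atTop] fun n => ∑ i ∈ Finset.range n, b i := by
      simpa only [Pi.sub_apply, Finset.sum_range_sub] using
        hsucc.isLittleO.sum_range hb hlim
    have hconst : (fun _ : ℕ => b 0) =o[atTop] fun n => ∑ i ∈ Finset.range n, b i :=
      isLittleO_const_left.mpr (.inr (tendsto_norm_atTop_atTop.comp hlim))
    simpa only [sub_add_cancel] using hdiff.add hconst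

theorem tendsto_mul_div_one_add_mul_of_isLittleO {ι : Type*} {l : Filter ι} {m b s : ι → ℝ}
    (hm : ∀ᶠ i in l, 0 ≤ m i) (hs : ∀ᶠ i in l, 0 ≤ s i) (hbs : b =o[l] s) :
    Tendsto (fun i => m i * b i / (1 + m i * s i)) l (nhds 0) := by
  have hbdd : (fun i => m i / (1 + m i * s i) * s i) =O[l] fun _ => (1 : ℝ) := by
    refine .of_norm_eventuallyLE ?_
    filter_upwards [hm, hs] with i hmi hsi
    rw [div_mul_eq_mul_div, Real.norm_of_nonneg (by positivity)]
    exact div_le_one_of_le₀ (by linarith) (by positivity)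
  simpa only [div_mul_eq_mul_div, isLittleO_one_iff] using
    ((isBigO_refl (fun i => m i / (1 + m i * s i)) l).mul_isLittleO hbs).trans_isBigO hbdd

end Asymptotics

section RieszRepresenter

variable {𝕜 V ι : Type*} [Field 𝕜] [AddCommGroup V] [Module 𝕜 V]
  {B : LinearMap.BilinForm 𝕜 V} {φ : V →ₗ[𝕜] 𝕜} {P : ι → V} {s : Finset ι} {i : ι}

variable (B φ P s) in
/-- The vector that represents the functional `φ` on the span of the `P i`, `i ∈ s`, with respect
to a bilinear form `B` for which the family `P` is orthogonal and not isotropic. -/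
def rieszRepresenter : V :=
  ∑ i ∈ s, (φ (P i) / B (P i) (P i)) • P i

theorem apply_rieszRepresenter :
    φ (rieszRepresenter B φ P s) = ∑ i ∈ s, φ (P i) ^ 2 / B (P i) (P i) := by
  simp only [rieszRepresenter, map_sum, map_smul, smul_eq_mul, div_mul_eq_mul_div, sq]

theorem form_rieszRepresenter_of_mem (hP : B.iIsOrtho P) (hi : i ∈ s)
    (hne : B (P i) (P i) ≠ 0) : B (P i) (rieszRepresenter B φ P s) = φ (P i) := by
  rw [rieszRepresenter, map_sum, Finset.sum_eq_single_of_mem i hi]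
  · rw [map_smul, smul_eq_mul, div_mul_cancel₀ _ hne]
  · intro k _ hki
    rw [map_smul, hP hki.symm, smul_zero]

theorem form_rieszRepresenter_of_notMem (hP : B.iIsOrtho P) (hi : i ∉ s) :
    B (P i) (rieszRepresenter B φ P s) = 0 := by
  rw [rieszRepresenter, map_sum]
  refine Finset.sum_eq_zero fun k hk => ?_
  rw [map_smul, hP (ne_of_mem_of_not_mem hk hi).symm, smul_zero]

theorem form_rieszRepresenter_self (hP : B.iIsOrtho P) (hne : ∀ i ∈ s, B (P i) (P i) ≠ 0) :
    B (rieszRepresenter B φ P s) (rieszRepresenter B φ P s) =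
      φ (rieszRepresenter B φ P s) := by
  conv_lhs => enter [1]; rw [rieszRepresenter]
  rw [map_sum, LinearMap.sum_apply, apply_rieszRepresenter]
  refine Finset.sum_congr rfl fun i hi => ?_
  rw [map_smul, LinearMap.smul_apply, form_rieszRepresenter_of_mem hP hi (hne i hi), smul_eq_mul,
    div_mul_eq_mul_div, sq]

/-- With this `c`, the vector `p - c • k` is the part of `p` orthogonal to `k` for the perturbed
form `B + m φ ⊗ φ`. -/
theorem form_add_mul_sq_sub_smul {p k : V} {m c : 𝕜} (hpk : B p k = 0) (hkp : B k p = 0)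
    (hkk : B k k = φ k) (hm : 1 + m * φ k ≠ 0) (hc : c = m * φ p / (1 + m * φ k)) :
    B (p - c • k) (p - c • k) + m * φ (p - c • k) ^ 2 =
      B p p + m * φ p ^ 2 / (1 + m * φ k) := by
  simp only [map_sub, map_smul, LinearMap.sub_apply, LinearMap.smul_apply, smul_eq_mul, hpk, hkp,
    hkk, hc]
  field_simp
  ring

end RieszRepresenter

section JacobiPolynomial

open Finset.HasAntidiagonal (antidiagonal mem_antidiagonal)

variable (α β : ℝ)

theorem inv_Gamma_eq_mul_inv_Gamma_add_one (s : ℝ) :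
    (Real.Gamma s)⁻¹ = s * (Real.Gamma (s + 1))⁻¹ := by
  rcases eq_or_ne s 0 with rfl | hs
  · rw [Real.Gamma_zero, inv_zero, zero_mul]
  · rw [Real.Gamma_add_one hs, mul_inv, mul_inv_cancel_left₀ hs]

/-- The coefficient of `((x - 1) / 2) ^ k * ((x + 1) / 2) ^ m` in `P_{k+m}^{(α,β)}`. Indexing by
both exponents makes it symmetric under swapping `(α, k)` with `(β, m)` and avoids subtraction in
`ℕ`. -/
noncomputable def jacobiCoeff (k m : ℕ) : ℝ :=
  Real.Gamma ((k + m : ℕ) + α + 1) * Real.Gamma ((k + m : ℕ) + β + 1) *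
    ((Real.Gamma (k + α + 1))⁻¹ * (Real.Gamma (m + β + 1))⁻¹ *
      (Real.Gamma (k + 1))⁻¹ * (Real.Gamma (m + 1))⁻¹)

theorem jacobiCoeff_swap (k m : ℕ) : jacobiCoeff β α m k = jacobiCoeff α β k m := by
  rw [jacobiCoeff, jacobiCoeff, add_comm m k]
  ring

theorem add_mul_jacobiCoeff_add_one (k m : ℕ) :
    (k + α + 1) * jacobiCoeff (α + 1) (β + 1) k m = (m + 1) * jacobiCoeff α β k (m + 1) := by
  have hα := inv_Gamma_eq_mul_inv_Gamma_add_one (k + α + 1)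
  have hm := inv_Gamma_eq_mul_inv_Gamma_add_one (m + 1)
  simp only [jacobiCoeff, Nat.cast_add, Nat.cast_one]
  rw [hα, hm]
  ring_nf

theorem add_mul_jacobiCoeff_add_one' (k m : ℕ) :
    (m + β + 1) * jacobiCoeff (α + 1) (β + 1) k m = (k + 1) * jacobiCoeff α β (k + 1) m := by
  rw [← jacobiCoeff_swap, ← jacobiCoeff_swap α, add_mul_jacobiCoeff_add_one]

/-- The product `((x - 1) / 2) ^ k * ((x + 1) / 2) ^ m`, in terms of which Jacobi polynomials are
expanded. -/
noncomputable def jacobiBasis (k m : ℕ) : ℝ[X] :=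
  (C 2⁻¹ * (X - 1)) ^ k * (C 2⁻¹ * (X + 1)) ^ m

theorem jacobiP_eq_sum_antidiagonal (n : ℕ) :
    jacobiP α β n =
      ∑ p ∈ antidiagonal n, jacobiCoeff α β p.1 p.2 • jacobiBasis p.1 p.2 := by
  rw [Finset.Nat.sum_antidiagonal_eq_sum_range_succ
    (fun k m => jacobiCoeff α β k m • jacobiBasis k m), jacobiP]
  refine Finset.sum_congr rfl fun k hk => ?_
  have hkn : k ≤ n := Finset.mem_range_succ_iff.mp hk
  rw [smul_eq_C_mul, jacobiBasis, ← mul_assoc, jacobiCoeff, Nat.add_sub_cancel' hkn,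
    Nat.cast_sub hkn, add_comm α]
  congr 3
  simp only [div_eq_mul_inv, mul_inv]
  ring

variable {α β} in
theorem jacobiP_zero (hα : -1 < α) (hβ : -1 < β) : jacobiP α β 0 = 1 := by
  have hΓα : Real.Gamma (α + 1) ≠ 0 := (Real.Gamma_pos_of_pos (by linarith)).ne'
  have hΓβ : Real.Gamma (β + 1) ≠ 0 := (Real.Gamma_pos_of_pos (by linarith)).ne'
  simp [jacobiP, hΓα, hΓβ]

theorem eval_one_jacobiP (n : ℕ) : (jacobiP α β n).eval 1 = jacobiCoeff α β 0 n := by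
  rw [jacobiP_eq_sum_antidiagonal, eval_finsetSum, Finset.sum_eq_single (0, n)]
  · simp [jacobiBasis, one_add_one_eq_two]
  · rintro ⟨k, m⟩ hkm hne
    have hk : k ≠ 0 := by
      rintro rfl
      exact hne (by simpa using hkm)
    simp [jacobiBasis, hk]
  · simp

variable {α β} in
theorem eval_one_jacobiP_succ (hα : -1 < α) (hβ : -1 < β) (n : ℕ) :
    (jacobiP α β (n + 1)).eval 1 * (n + 1) = (jacobiP α β n).eval 1 * (n + α + 1) := by
  have hn : (0 : ℝ) ≤ n := n.cast_nonneg
  have hn1 : (n : ℝ) + 1 ≠ 0 := by positivity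
  have hnα : (n : ℝ) + α + 1 ≠ 0 := by linarith [hn]
  have hΓ : Real.Gamma (n + β + 1) ≠ 0 := (Real.Gamma_pos_of_pos (by linarith [hn])).ne'
  have hΓ' : Real.Gamma (n + 1 + β + 1) ≠ 0 := (Real.Gamma_pos_of_pos (by linarith [hn])).ne'
  simp only [eval_one_jacobiP, jacobiCoeff, zero_add, Nat.cast_add, Nat.cast_one, Nat.cast_zero]
  rw [Real.Gamma_add_one hn1, add_right_comm (n : ℝ) 1 α, Real.Gamma_add_one hnα]
  field_simp

theorem derivative_jacobiBasis (k m : ℕ) :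
    derivative (jacobiBasis k m) =
      (k / 2 : ℝ) • jacobiBasis (k - 1) m + (m / 2 : ℝ) • jacobiBasis k (m - 1) := by
  refine Polynomial.funext fun x => ?_
  simp only [jacobiBasis, derivative_mul, derivative_pow, derivative_add, derivative_sub,
    derivative_C, derivative_X, derivative_one, map_natCast, eval_add, eval_sub, eval_mul, eval_pow,
    eval_smul, eval_natCast, eval_C, eval_X, eval_one, eval_zero, smul_eq_mul]
  ring

theorem derivative_jacobiP_succ (n : ℕ) :
    derivative (jacobiP α β (n + 1)) =
      ((n + α + β + 2) / 2) • jacobiP (α + 1) (β + 1) n := by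
  simp only [jacobiP_eq_sum_antidiagonal, derivative_sum, derivative_smul, derivative_jacobiBasis,
    smul_add, Finset.sum_add_distrib]
  rw [Finset.Nat.sum_antidiagonal_succ, Finset.Nat.sum_antidiagonal_succ', Finset.smul_sum]
  simp only [Nat.cast_zero, zero_div, zero_smul, smul_zero, zero_add, add_tsub_cancel_right,
    smul_smul, ← Finset.sum_add_distrib, ← add_smul]
  refine Finset.sum_congr rfl fun ⟨k, m⟩ hkm => ?_
  have hn : (k + m : ℝ) = n := by exact_mod_cast mem_antidiagonal.mp hkm
  congr 1
  push_cast
  linear_combination -(1 / 2) * (add_mul_jacobiCoeff_add_one α β k m +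
    add_mul_jacobiCoeff_add_one' α β k m) +
    jacobiCoeff (α + 1) (β + 1) k m / 2 * hn

/-- The first-order operator `f ↦ w⁻¹ ((1 - x²) w f)'` for the weight
`w = (1 - x) ^ α * (1 + x) ^ β`. Up to sign it is the adjoint of differentiation. -/
noncomputable def raisingOp : ℝ[X] →ₗ[ℝ] ℝ[X] :=
  LinearMap.mulLeft ℝ ((1 - X) * (1 + X)) ∘ₗ derivative +
    LinearMap.mulLeft ℝ (C (β + 1) * (1 - X) - C (α + 1) * (1 + X))

theorem raisingOp_apply (f : ℝ[X]) :
    raisingOp α β f = (1 - X) * (1 + X) * derivative f +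
      (C (β + 1) * (1 - X) - C (α + 1) * (1 + X)) * f :=
  rfl

theorem raisingOp_mul (f g : ℝ[X]) :
    raisingOp α β (f * g) = (1 - X) * (1 + X) * (derivative f * g) + f * raisingOp α β g := by
  rw [raisingOp_apply, raisingOp_apply, derivative_mul]
  ring

theorem raisingOp_jacobiBasis (k m : ℕ) :
    raisingOp α β (jacobiBasis k m) =
      (-2 : ℝ) • ((k + α + 1) • jacobiBasis k (m + 1) + (m + β + 1) • jacobiBasis (k + 1) m) := by
  refine Polynomial.funext fun x => ?_
  rw [raisingOp_apply, derivative_jacobiBasis]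
  simp only [jacobiBasis, eval_add, eval_sub, eval_mul, eval_pow, eval_smul, eval_C, eval_X,
    eval_one, smul_eq_mul]
  rcases k with _ | k <;> rcases m with _ | m <;> push_cast [add_tsub_cancel_right] <;> ring

theorem raisingOp_jacobiP (n : ℕ) :
    raisingOp α β (jacobiP (α + 1) (β + 1) n) = (-2 * (n + 1) : ℝ) • jacobiP α β (n + 1) := by
  have hsplit : (n + 1 : ℝ) • jacobiP α β (n + 1) =
      ∑ p ∈ antidiagonal (n + 1), (p.2 * jacobiCoeff α β p.1 p.2) • jacobiBasis p.1 p.2 +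
      ∑ p ∈ antidiagonal (n + 1), (p.1 * jacobiCoeff α β p.1 p.2) • jacobiBasis p.1 p.2 := by
    rw [jacobiP_eq_sum_antidiagonal, Finset.smul_sum, ← Finset.sum_add_distrib]
    refine Finset.sum_congr rfl fun ⟨k, m⟩ hkm => ?_
    have hn : (k + m : ℝ) = n + 1 := by exact_mod_cast mem_antidiagonal.mp hkm
    rw [smul_smul, ← add_smul, ← hn]
    ring_nf
  rw [mul_smul, hsplit, Finset.Nat.sum_antidiagonal_succ', Finset.Nat.sum_antidiagonal_succ]
  simp only [Nat.cast_zero, Nat.cast_add, Nat.cast_one, zero_mul, zero_smul, zero_add,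
    ← add_mul_jacobiCoeff_add_one, ← add_mul_jacobiCoeff_add_one', jacobiP_eq_sum_antidiagonal,
    map_sum, map_smul, raisingOp_jacobiBasis, ← Finset.sum_add_distrib, Finset.smul_sum]
  refine Finset.sum_congr rfl fun _ _ => ?_
  module

end JacobiPolynomial

section JacobiForm

open MeasureTheory

variable {α β : ℝ}

/-- The weight `(1 - x) ^ α * (1 + x) ^ β` of the Jacobi polynomials on `[-1, 1]`. -/
noncomputable def jacobiWeight (α β x : ℝ) : ℝ :=
  (1 - x) ^ α * (1 + x) ^ β

theorem jacobiWeight_pos {x : ℝ} (hx : x ∈ Set.Ioo (-1) 1) : 0 < jacobiWeight α β x :=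
  mul_pos (Real.rpow_pos_of_pos (by linarith [hx.2]) _)
    (Real.rpow_pos_of_pos (by linarith [hx.1]) _)

theorem jacobiWeight_neg (x : ℝ) : jacobiWeight β α (-x) = jacobiWeight α β x := by
  rw [jacobiWeight, jacobiWeight, sub_neg_eq_add, ← sub_eq_add_neg, mul_comm]

theorem jacobiWeight_add_one_add_one (hα : -1 < α) (hβ : -1 < β) {x : ℝ}
    (hx : x ∈ Set.Icc (-1) 1) :
    jacobiWeight (α + 1) (β + 1) x = (1 - x) * (1 + x) * jacobiWeight α β x := by
  rw [jacobiWeight, jacobiWeight, Real.rpow_add_one' (by linarith [hx.2]) (by linarith),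
    Real.rpow_add_one' (by linarith [hx.1]) (by linarith)]
  ring

theorem continuous_jacobiWeight (hα : 0 ≤ α) (hβ : 0 ≤ β) : Continuous (jacobiWeight α β) :=
  ((continuous_const.sub continuous_id).rpow_const fun _ => .inr hα).mul
    ((continuous_const.add continuous_id).rpow_const fun _ => .inr hβ)

theorem intervalIntegrable_jacobiWeight_zero_one (hα : -1 < α) (β : ℝ) :
    IntervalIntegrable (jacobiWeight α β) volume 0 1 := by
  have hleft : IntervalIntegrable (fun x : ℝ => (1 - x) ^ α) volume 0 1 := by
    simpa using (intervalIntegral.intervalIntegrable_rpow' (a := 1) (b := 0) hα).comp_sub_left 1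
  refine hleft.mul_continuousOn (.rpow_const (by fun_prop) fun x hx => .inl ?_)
  rw [Set.uIcc_of_le zero_le_one] at hx
  linarith [hx.1]

theorem intervalIntegrable_jacobiWeight (hα : -1 < α) (hβ : -1 < β) :
    IntervalIntegrable (jacobiWeight α β) volume (-1) 1 := by
  have hneg := (intervalIntegrable_jacobiWeight_zero_one hβ α).comp_sub_left 0
  simp only [zero_sub, jacobiWeight_neg, sub_zero] at hneg
  exact hneg.symm.trans (intervalIntegrable_jacobiWeight_zero_one hα β)

theorem intervalIntegrable_eval_mul_jacobiWeight (hα : -1 < α) (hβ : -1 < β) (f : ℝ[X]) :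
    IntervalIntegrable (fun x => f.eval x * jacobiWeight α β x) volume (-1) 1 :=
  (intervalIntegrable_jacobiWeight hα hβ).continuousOn_mul f.continuous.continuousOn

/-- The moment functional of the Jacobi weight: integration of polynomials against it. -/
noncomputable def jacobiFunctional (hα : -1 < α) (hβ : -1 < β) : ℝ[X] →ₗ[ℝ] ℝ where
  toFun f := ∫ x in (-1 : ℝ)..1, f.eval x * jacobiWeight α β x
  map_add' f g := by
    simp only [eval_add, add_mul]
    exact intervalIntegral.integral_add (intervalIntegrable_eval_mul_jacobiWeight hα hβ f)
      (intervalIntegrable_eval_mul_jacobiWeight hα hβ g)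
  map_smul' c f := by
    simp only [eval_smul, smul_eq_mul, mul_assoc, intervalIntegral.integral_const_mul,
      RingHom.id_apply]

theorem jacobiFunctional_apply (hα : -1 < α) (hβ : -1 < β) (f : ℝ[X]) :
    jacobiFunctional hα hβ f = ∫ x in (-1 : ℝ)..1, f.eval x * jacobiWeight α β x :=
  rfl

theorem jacobiFunctional_one_pos (hα : -1 < α) (hβ : -1 < β) : 0 < jacobiFunctional hα hβ 1 :=
  intervalIntegral.intervalIntegral_pos_of_pos_on
    (intervalIntegrable_eval_mul_jacobiWeight hα hβ 1)
    (fun x hx => by simpa only [eval_one, one_mul] using jacobiWeight_pos hx) (by norm_num)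

theorem jacobiFunctional_add_one_add_one (hα : -1 < α) (hβ : -1 < β) (f : ℝ[X]) :
    jacobiFunctional (hα.trans (lt_add_one α)) (hβ.trans (lt_add_one β)) f =
      jacobiFunctional hα hβ ((1 - X) * (1 + X) * f) := by
  refine intervalIntegral.integral_congr fun x hx => ?_
  rw [Set.uIcc_of_le (by norm_num)] at hx
  simp only [jacobiWeight_add_one_add_one hα hβ hx, eval_mul, eval_sub, eval_add, eval_one, eval_X]
  ring

theorem hasDerivAt_jacobiWeight_mul_eval (f : ℝ[X]) {x : ℝ} (hx : x ∈ Set.Ioo (-1) 1) :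
    HasDerivAt (fun y => jacobiWeight (α + 1) (β + 1) y * f.eval y)
      ((raisingOp α β f).eval x * jacobiWeight α β x) x := by
  have hx₁ : 1 - x ≠ 0 := by linarith [hx.2]
  have hx₂ : 1 + x ≠ 0 := by linarith [hx.1]
  have hsub := ((hasDerivAt_id x).const_sub 1).rpow_const (p := α + 1) (.inl hx₁)
  have hadd := ((hasDerivAt_id x).const_add 1).rpow_const (p := β + 1) (.inl hx₂)
  refine ((hsub.mul hadd).mul (f.hasDerivAt x)).congr_deriv ?_
  simp only [id, Pi.mul_apply, add_sub_cancel_right, Real.rpow_add_one hx₁,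
    Real.rpow_add_one hx₂, raisingOp_apply, jacobiWeight, eval_mul, eval_sub, eval_add, eval_one,
    eval_X, eval_C]
  ring

theorem jacobiFunctional_raisingOp (hα : -1 < α) (hβ : -1 < β) (f : ℝ[X]) :
    jacobiFunctional hα hβ (raisingOp α β f) = 0 := by
  have hα' : 0 < α + 1 := by linarith
  have hβ' : 0 < β + 1 := by linarith
  rw [jacobiFunctional_apply, intervalIntegral.integral_eq_sub_of_hasDerivAt_of_le (by norm_num)
    ((continuous_jacobiWeight hα'.le hβ'.le).mul f.continuous).continuousOn
    (fun x hx => hasDerivAt_jacobiWeight_mul_eval f hx)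
    (intervalIntegrable_eval_mul_jacobiWeight hα hβ _)]
  simp [jacobiWeight, Real.zero_rpow hα'.ne', Real.zero_rpow hβ'.ne']

theorem jacobiFunctional_add_one_add_one_one (hα : -1 < α) (hβ : -1 < β) :
    (α + β + 2) * (α + β + 3) *
        jacobiFunctional (hα.trans (lt_add_one α)) (hβ.trans (lt_add_one β)) 1 =
      4 * (α + 1) * (β + 1) * jacobiFunctional hα hβ 1 := by
  have hraise : raisingOp α β (C (α + β + 2) * X + C (β - α)) =
      ((α + β + 2) * (α + β + 3)) • ((1 - X) * (1 + X) * 1) - (4 * (α + 1) * (β + 1)) • 1 := by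
    refine Polynomial.funext fun x => ?_
    simp only [raisingOp_apply, derivative_add, derivative_mul, derivative_C, derivative_X,
      eval_add, eval_sub, eval_mul, eval_smul, eval_C, eval_X, eval_one, eval_zero, smul_eq_mul]
    ring
  have hzero := jacobiFunctional_raisingOp hα hβ (C (α + β + 2) * X + C (β - α))
  rw [hraise, map_sub, map_smul, map_smul, ← jacobiFunctional_add_one_add_one] at hzero
  exact sub_eq_zero.mp hzero

/-- The inner product of `L²((1 - x) ^ α * (1 + x) ^ β dx)` on polynomials. -/
noncomputable def jacobiForm (hα : -1 < α) (hβ : -1 < β) : LinearMap.BilinForm ℝ ℝ[X] :=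
  (LinearMap.mul ℝ ℝ[X]).compr₂ (jacobiFunctional hα hβ)

theorem jacobiForm_apply (hα : -1 < α) (hβ : -1 < β) (f g : ℝ[X]) :
    jacobiForm hα hβ f g = jacobiFunctional hα hβ (f * g) :=
  rfl

theorem isSymm_jacobiForm (hα : -1 < α) (hβ : -1 < β) : (jacobiForm hα hβ).IsSymm :=
  ⟨fun f g => by rw [jacobiForm_apply, jacobiForm_apply, mul_comm]⟩

theorem jacobiForm_eq_integral (hα : -1 < α) (hβ : -1 < β) (f g : ℝ[X]) :
    jacobiForm hα hβ f g =
      ∫ x in (-1 : ℝ)..1, f.eval x * g.eval x * (1 - x) ^ α * (1 + x) ^ β := by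
  simp only [jacobiForm_apply, jacobiFunctional_apply, jacobiWeight, eval_mul, mul_assoc]

theorem jacobiForm_jacobiP_self (hα : -1 < α) (hβ : -1 < β) (n : ℕ) :
    jacobiForm hα hβ (jacobiP α β n) (jacobiP α β n) = jacobiNormSq α β n := by
  simp only [jacobiForm_eq_integral, jacobiNormSq, sq]

theorem jacobiForm_raisingOp (hα : -1 < α) (hβ : -1 < β) (f g : ℝ[X]) :
    jacobiForm hα hβ f (raisingOp α β g) =
      -jacobiForm (hα.trans (lt_add_one α)) (hβ.trans (lt_add_one β)) (derivative f) g := by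
  have hzero := jacobiFunctional_raisingOp hα hβ (f * g)
  rw [raisingOp_mul, map_add, ← jacobiFunctional_add_one_add_one] at hzero
  exact eq_neg_of_add_eq_zero_right hzero

theorem jacobiForm_jacobiP_succ (hα : -1 < α) (hβ : -1 < β) (f : ℝ[X]) (n : ℕ) :
    jacobiForm hα hβ f (jacobiP α β (n + 1)) =
      jacobiForm (hα.trans (lt_add_one α)) (hβ.trans (lt_add_one β)) (derivative f)
        (jacobiP (α + 1) (β + 1) n) / (2 * (n + 1)) := by
  have hraise := jacobiForm_raisingOp hα hβ f (jacobiP (α + 1) (β + 1) n)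
  rw [raisingOp_jacobiP, map_smul, smul_eq_mul] at hraise
  rw [eq_div_iff (by positivity)]
  linear_combination -hraise

theorem jacobiForm_jacobiP_succ_succ (hα : -1 < α) (hβ : -1 < β) (m n : ℕ) :
    jacobiForm hα hβ (jacobiP α β (m + 1)) (jacobiP α β (n + 1)) =
      (m + α + β + 2) / (4 * (n + 1)) *
        jacobiForm (hα.trans (lt_add_one α)) (hβ.trans (lt_add_one β))
          (jacobiP (α + 1) (β + 1) m) (jacobiP (α + 1) (β + 1) n) := by
  rw [jacobiForm_jacobiP_succ, derivative_jacobiP_succ, map_smul, LinearMap.smul_apply,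
    smul_eq_mul]
  field_simp
  ring

theorem jacobiForm_jacobiP_zero_succ (hα : -1 < α) (hβ : -1 < β) (n : ℕ) :
    jacobiForm hα hβ (jacobiP α β 0) (jacobiP α β (n + 1)) = 0 := by
  rw [jacobiForm_jacobiP_succ, jacobiP_zero hα hβ, derivative_one, map_zero,
    LinearMap.zero_apply, zero_div]

theorem iIsOrtho_jacobiP (hα : -1 < α) (hβ : -1 < β) :
    (jacobiForm hα hβ).iIsOrtho (jacobiP α β) := by
  refine LinearMap.BilinForm.iIsOrtho_def.mpr fun m n hmn => ?_
  induction m generalizing α β n with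
  | zero =>
    obtain ⟨n, rfl⟩ := Nat.exists_eq_succ_of_ne_zero hmn.symm
    exact jacobiForm_jacobiP_zero_succ hα hβ n
  | succ m ih =>
    rcases n with _ | n
    · exact (isSymm_jacobiForm hα hβ).isRefl.eq_zero (jacobiForm_jacobiP_zero_succ hα hβ m)
    · rw [jacobiForm_jacobiP_succ_succ, ih _ _ n (by simpa using hmn), mul_zero]

end JacobiForm

section JacobiNorm

variable {α β : ℝ}

theorem jacobiNormSq_zero (hα : -1 < α) (hβ : -1 < β) :
    jacobiNormSq α β 0 = jacobiFunctional hα hβ 1 := by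
  rw [← jacobiForm_jacobiP_self hα hβ, jacobiP_zero hα hβ, jacobiForm_apply, mul_one]

theorem jacobiNormSq_succ (hα : -1 < α) (hβ : -1 < β) (n : ℕ) :
    jacobiNormSq α β (n + 1) =
      (n + α + β + 2) / (4 * (n + 1)) * jacobiNormSq (α + 1) (β + 1) n := by
  rw [← jacobiForm_jacobiP_self hα hβ, jacobiForm_jacobiP_succ_succ, jacobiForm_jacobiP_self]

theorem jacobiNormSq_pos (hα : -1 < α) (hβ : -1 < β) (n : ℕ) : 0 < jacobiNormSq α β n := by
  induction n generalizing α β with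
  | zero => exact jacobiNormSq_zero hα hβ ▸ jacobiFunctional_one_pos hα hβ
  | succ n ih =>
    have hn : (0 : ℝ) ≤ n := n.cast_nonneg
    rw [jacobiNormSq_succ hα hβ]
    exact mul_pos (div_pos (by linarith [hn]) (by linarith [hn]))
      (ih (hα.trans (lt_add_one α)) (hβ.trans (lt_add_one β)))

theorem jacobiNormSq_succ_mul (hα : -1 < α) (hβ : -1 < β) (n : ℕ) :
    jacobiNormSq α β (n + 1) * ((n + 1) * (n + α + β + 1) * (2 * n + α + β + 3)) =
      jacobiNormSq α β n * ((n + α + 1) * (n + β + 1) * (2 * n + α + β + 1)) := by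
  induction n generalizing α β with
  | zero =>
    have hbase := jacobiFunctional_add_one_add_one_one hα hβ
    rw [jacobiNormSq_succ hα hβ, jacobiNormSq_zero hα hβ,
      jacobiNormSq_zero (hα.trans (lt_add_one α)) (hβ.trans (lt_add_one β))]
    push_cast
    linear_combination (α + β + 1) / 4 * hbase
  | succ n ih =>
    have hstep := ih (hα.trans (lt_add_one α)) (hβ.trans (lt_add_one β))
    rw [jacobiNormSq_succ hα hβ, jacobiNormSq_succ hα hβ]
    push_cast
    field_simp
    linear_combination (n + α + β + 2) * hstep

end JacobiNorm

section DerivativesAtOne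

open Asymptotics

variable {α β : ℝ}

/-- The functional `f ↦ f^{(j)}(x)`. -/
noncomputable def iteratedDerivEval (j : ℕ) (x : ℝ) : ℝ[X] →ₗ[ℝ] ℝ :=
  leval x ∘ₗ derivative ^ j

theorem iteratedDerivEval_apply (j : ℕ) (x : ℝ) (f : ℝ[X]) :
    iteratedDerivEval j x f = (derivative^[j] f).eval x := by
  rw [iteratedDerivEval, LinearMap.comp_apply, Module.End.pow_apply, leval_apply]

theorem iteratedDerivEval_succ_jacobiP_succ (α β x : ℝ) (j n : ℕ) :
    iteratedDerivEval (j + 1) x (jacobiP α β (n + 1)) =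
      (n + α + β + 2) / 2 * iteratedDerivEval j x (jacobiP (α + 1) (β + 1) n) := by
  rw [iteratedDerivEval_apply, Function.iterate_succ_apply, derivative_jacobiP_succ,
    ← iteratedDerivEval_apply, map_smul, smul_eq_mul]

theorem iteratedDerivEval_one_jacobiP_succ_mul (hα : -1 < α) (hβ : -1 < β) {j n : ℕ}
    (hjn : j ≤ n) :
    iteratedDerivEval j 1 (jacobiP α β (n + 1)) * ((n + α + β + 1) * (n - j + 1)) =
      iteratedDerivEval j 1 (jacobiP α β n) * ((n + α + 1) * (n + α + β + 1 + j)) := by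
  induction j generalizing α β n with
  | zero =>
    simp only [iteratedDerivEval_apply, Function.iterate_zero, id]
    push_cast
    linear_combination (n + α + β + 1) * eval_one_jacobiP_succ hα hβ n
  | succ j ih =>
    obtain ⟨n, rfl⟩ := Nat.exists_eq_add_of_le' (Nat.one_le_of_lt hjn)
    have hstep := ih (hα.trans (lt_add_one α)) (hβ.trans (lt_add_one β))
      (Nat.le_of_succ_le_succ hjn)
    rw [iteratedDerivEval_succ_jacobiP_succ, iteratedDerivEval_succ_jacobiP_succ]
    push_cast
    linear_combination (n + α + β + 2) / 2 * hstep

theorem isEquivalent_jacobiNormSq_succ (hα : -1 < α) (hβ : -1 < β) :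
    (fun n => jacobiNormSq α β (n + 1)) ~[atTop] jacobiNormSq α β := by
  have hcoeff := ((isEquivalent_natCast_add_const 1 (α + 1)).mul
    (isEquivalent_natCast_add_const (α + β + 1) (β + 1))).mul
    (isEquivalent_natCast_add_const ((α + β + 3) / 2) ((α + β + 1) / 2))
  refine isEquivalent_of_mul_eq_mul hcoeff ?_ (.of_forall fun n => ?_)
  · filter_upwards [eventually_ge_atTop 1] with n hn
    have hn' : (1 : ℝ) ≤ n := mod_cast hn
    have h₁ : 0 < (n : ℝ) + (α + β + 1) := by linarith
    have h₂ : 0 < (n : ℝ) + (α + β + 3) / 2 := by linarith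
    simp only [Pi.mul_apply]
    positivity
  · simp only [Pi.mul_apply]
    linear_combination (1 / 2) * jacobiNormSq_succ_mul hα hβ n

theorem isEquivalent_iteratedDerivEval_one_jacobiP_succ (hα : -1 < α) (hβ : -1 < β) (j : ℕ) :
    (fun n => iteratedDerivEval j 1 (jacobiP α β (n + 1))) ~[atTop]
      fun n => iteratedDerivEval j 1 (jacobiP α β n) := by
  have hcoeff := (isEquivalent_natCast_add_const (α + β + 1) (α + 1)).mul
    (isEquivalent_natCast_add_const (1 - j) (α + β + 1 + j))
  refine isEquivalent_of_mul_eq_mul hcoeff ?_ ?_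
  · filter_upwards [eventually_ge_atTop 1, eventually_ge_atTop j] with n hn hjn
    have hn' : (1 : ℝ) ≤ n := mod_cast hn
    have hjn' : (j : ℝ) ≤ n := mod_cast hjn
    exact mul_ne_zero (by linarith) (by linarith)
  · filter_upwards [eventually_ge_atTop j] with n hjn
    simp only [Pi.mul_apply]
    linear_combination iteratedDerivEval_one_jacobiP_succ_mul hα hβ hjn

end DerivativesAtOne

section JacobiSobolev

open Asymptotics

variable {α β : ℝ}

/-- The `n`-th summand of the kernel `K^{(j,j)}(1,1)`. -/
noncomputable def kernKTerm (α β : ℝ) (j n : ℕ) : ℝ :=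
  iteratedDerivEval j 1 (jacobiP α β n) ^ 2 / jacobiNormSq α β n

theorem kernKTerm_nonneg (hα : -1 < α) (hβ : -1 < β) (j n : ℕ) : 0 ≤ kernKTerm α β j n :=
  div_nonneg (sq_nonneg _) (jacobiNormSq_pos hα hβ n).le

theorem kernK_one_one (α β : ℝ) (j n : ℕ) :
    kernK α β j j n 1 1 = ∑ i ∈ Finset.range (n + 1), kernKTerm α β j i := by
  simp only [kernK, kernKTerm, iteratedDerivEval_apply, sq]

theorem isLittleO_kernKTerm (hα : -1 < α) (hβ : -1 < β) (j : ℕ) :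
    kernKTerm α β j =o[atTop] fun n => ∑ i ∈ Finset.range n, kernKTerm α β j i :=
  isLittleO_sum_range_of_isEquivalent_succ (kernKTerm_nonneg hα hβ j)
    (((isEquivalent_iteratedDerivEval_one_jacobiP_succ hα hβ j).pow 2).div
      (isEquivalent_jacobiNormSq_succ hα hβ))

theorem kernKPoly_eq_rieszRepresenter (hα : -1 < α) (hβ : -1 < β) (j n : ℕ) :
    kernKPoly α β j n = rieszRepresenter (jacobiForm hα hβ) (iteratedDerivEval j 1)
      (jacobiP α β) (Finset.range (n + 1)) := by
  simp only [kernKPoly, rieszRepresenter, jacobiForm_jacobiP_self, iteratedDerivEval_apply,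
    smul_eq_C_mul]

theorem sobInner_eq (hα : -1 < α) (hβ : -1 < β) (j : ℕ) (m : ℝ) (f : ℝ[X]) :
    sobInner α β j m f f = jacobiForm hα hβ f f + m * iteratedDerivEval j 1 f ^ 2 := by
  rw [sobInner, jacobiForm_eq_integral, iteratedDerivEval_apply, mul_assoc m, sq]

theorem sobInner_sobQ_succ (hα : -1 < α) (hβ : -1 < β) (j : ℕ) {Ms : ℕ → ℝ} {n : ℕ}
    (hMs : 0 ≤ Ms (n + 1)) :
    sobInner α β j (Ms (n + 1)) (sobQ α β j Ms (n + 1)) (sobQ α β j Ms (n + 1)) =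
      jacobiNormSq α β (n + 1) + Ms (n + 1) * iteratedDerivEval j 1 (jacobiP α β (n + 1)) ^ 2 /
        (1 + Ms (n + 1) * ∑ i ∈ Finset.range (n + 1), kernKTerm α β j i) := by
  have hP := iIsOrtho_jacobiP hα hβ
  have hne (i : ℕ) : jacobiForm hα hβ (jacobiP α β i) (jacobiP α β i) ≠ 0 :=
    jacobiForm_jacobiP_self hα hβ i ▸ (jacobiNormSq_pos hα hβ i).ne'
  have hker : kernK α β j j n 1 1 = iteratedDerivEval j 1 (kernKPoly α β j n) := by
    rw [kernK_one_one, kernKPoly_eq_rieszRepresenter hα hβ, apply_rieszRepresenter]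
    simp only [jacobiForm_jacobiP_self, kernKTerm]
  have hpos : 0 ≤ kernK α β j j n 1 1 :=
    kernK_one_one α β j n ▸ Finset.sum_nonneg fun i _ => kernKTerm_nonneg hα hβ j i
  have horth : jacobiForm hα hβ (jacobiP α β (n + 1)) (kernKPoly α β j n) = 0 := by
    rw [kernKPoly_eq_rieszRepresenter hα hβ]
    exact form_rieszRepresenter_of_notMem hP Finset.notMem_range_self
  have hself : jacobiForm hα hβ (kernKPoly α β j n) (kernKPoly α β j n) =
      iteratedDerivEval j 1 (kernKPoly α β j n) := by
    rw [kernKPoly_eq_rieszRepresenter hα hβ]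
    exact form_rieszRepresenter_self hP fun i _ => hne i
  rw [sobInner_eq hα hβ, sobQ, Nat.add_sub_cancel, ← smul_eq_C_mul, ← iteratedDerivEval_apply,
    form_add_mul_sq_sub_smul horth ((isSymm_jacobiForm hα hβ).isRefl.eq_zero horth) hself
      (by rw [← hker]; positivity) (by rw [hker]), ← hker, kernK_one_one, jacobiForm_jacobiP_self]

theorem sobInner_sobQ_succ_div (hα : -1 < α) (hβ : -1 < β) (j : ℕ) {Ms : ℕ → ℝ} {n : ℕ}
    (hMs : 0 ≤ Ms (n + 1)) :
    sobInner α β j (Ms (n + 1)) (sobQ α β j Ms (n + 1)) (sobQ α β j Ms (n + 1)) /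
        jacobiNormSq α β (n + 1) =
      1 + Ms (n + 1) * kernKTerm α β j (n + 1) /
        (1 + Ms (n + 1) * ∑ i ∈ Finset.range (n + 1), kernKTerm α β j i) := by
  rw [sobInner_sobQ_succ hα hβ j hMs, add_div, div_self (jacobiNormSq_pos hα hβ (n + 1)).ne',
    div_right_comm, mul_div_assoc, kernKTerm]

theorem sobQ_normSq_ratio_general {α β : ℝ} (hα : -1 < α) (hβ : -1 < β) (j : ℕ) {Ms : ℕ → ℝ}
    (hMs : ∀ᶠ n in atTop, 0 ≤ Ms n) :
    Tendsto
      (fun n => sobInner α β j (Ms n) (sobQ α β j Ms n) (sobQ α β j Ms n) / jacobiNormSq α β n)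
      atTop (nhds 1) := by
  have hsum_nonneg (n : ℕ) : 0 ≤ ∑ i ∈ Finset.range n, kernKTerm α β j i :=
    Finset.sum_nonneg fun i _ => kernKTerm_nonneg hα hβ j i
  have hcorrection := tendsto_mul_div_one_add_mul_of_isLittleO hMs (.of_forall hsum_nonneg)
    (isLittleO_kernKTerm hα hβ j)
  rw [← add_zero (1 : ℝ)]
  refine (hcorrection.const_add 1).congr' ?_
  filter_upwards [hMs, eventually_ge_atTop 1] with n hMn hn
  obtain ⟨n, rfl⟩ := Nat.exists_eq_add_of_le' hn
  exact (sobInner_sobQ_succ_div hα hβ j hMn).symm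

end JacobiSobolev

/-- `(Q_n,Q_n)_{S,n} ≈ ‖P_n^{(α,β)}‖²`. -/
theorem sobQ_normSq_ratio (α β : ℝ) (hα : -1 < α) (hβ : -1 < β) (j : ℕ)
    (γ M : ℝ) (hM : 0 < M) (Ms : ℕ → ℝ) (hMs : ∀ n, 0 ≤ Ms n)
    (hlim : Filter.Tendsto (fun n : ℕ => Ms n * (n : ℝ) ^ γ) Filter.atTop (nhds M)) :
    Filter.Tendsto
      (fun n : ℕ => sobInner α β j (Ms n) (sobQ α β j Ms n) (sobQ α β j Ms n) /
        jacobiNormSq α β n)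
      Filter.atTop (nhds 1) := by
  exact sobQ_normSq_ratio_general hα hβ j (.of_forall hMs)
end

section
/- Fix real α, β > −1, j ∈ ℕ, γ ∈ ℝ, M > 0, and a sequence M_n ≥ 0 with lim_{n→∞} M_n n^γ = M. For each n ≥ j+1, the real numbers b_0(n), …, b_{j+1}(n) satisfying Q_n(x) = Σ_{i=0}^{j+1} b_i(n)·(1−x)^i·P_{n−i}^{(α+2i,β)}(x) are unique, and for each i ∈ {0,1,…,j+1} the sequence (b_i(n))_n converges to a real limit as n → ∞. -/
open Polynomial Filter

/-!
Taking Taylor coefficients at `1` of order `k = 0, …, j + 1` turns the connection formula into a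
linear system for `b_0(n), …, b_{j+1}(n)`. Its matrix is lower triangular, since `(1 - x) ^ i`
vanishes to order `i` at `1`, and its diagonal entries `± P_{n-i}^{(α+2i,β)}(1)` are nonzero; this
gives uniqueness.

For the convergence, divide row `k` by `n ^ (α + 2k)`. Asymptotics of Gamma quotients show that the
rescaled matrices converge to a lower triangular matrix which is again invertible, so it remains to
see that the rescaled Taylor coefficients of `Q_n` converge. The norms `‖P_n‖²`, computed from beta
integrals, decay like `1 / n`, so the kernels follow power laws by Stolz–Cesàro. Finally
`M_n / (1 + M_n K) = K⁻¹ * (x / (1 + x))` with `K = K_{n-1}^{(j,j)}(1,1)` and `x = M_n K`, and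
`x / (1 + x)` has a limit because `x` follows a power law with positive constant.
-/

open scoped Topology Nat Matrix

/-! ### Power laws -/

/-- The power law `u n ∼ c * n ^ p`, encoded as convergence of the quotient, so that `c = 0` is
allowed and means `u n = o(n ^ p)`. -/
def HasPowerLaw (u : ℕ → ℝ) (p c : ℝ) : Prop :=
  Tendsto (fun n : ℕ => u n / (n : ℝ) ^ p) atTop (𝓝 c)

lemma eventually_natCast_pos : ∀ᶠ n : ℕ in atTop, (0 : ℝ) < n := by
  filter_upwards [eventually_gt_atTop 0] with n hn using by exact_mod_cast hn

lemma hasPowerLaw_linear (a b : ℝ) : HasPowerLaw (fun n => a * n + b) 1 a := by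
  have h : Tendsto (fun n : ℕ => a + b * (n : ℝ)⁻¹) atTop (𝓝 (a + b * 0)) :=
    (tendsto_inv_atTop_nhds_zero_nat.const_mul b).const_add a
  rw [mul_zero, add_zero] at h
  refine h.congr' ?_
  filter_upwards [eventually_natCast_pos] with n hn
  rw [Real.rpow_one]
  field_simp

lemma hasPowerLaw_add_one_rpow_sub_rpow (p : ℝ) :
    HasPowerLaw (fun n => ((n : ℝ) + 1) ^ (p + 1) - (n : ℝ) ^ (p + 1)) p (p + 1) := by
  have hderiv : HasDerivAt (fun x : ℝ => x ^ (p + 1)) (p + 1) 1 := by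
    simpa using Real.hasDerivAt_rpow_const (x := 1) (p := p + 1) (Or.inl one_ne_zero)
  have hinv : Tendsto (fun n : ℕ => (n : ℝ)⁻¹) atTop (𝓝[≠] 0) :=
    tendsto_nhdsWithin_iff.2 ⟨tendsto_inv_atTop_nhds_zero_nat,
      eventually_natCast_pos.mono fun n hn => inv_ne_zero hn.ne'⟩
  refine (hderiv.tendsto_slope_zero.comp hinv).congr' ?_
  filter_upwards [eventually_natCast_pos] with n hn
  simp only [Function.comp_apply, inv_inv, smul_eq_mul, Real.one_rpow]
  rw [show (n : ℝ) + 1 = n * (1 + (n : ℝ)⁻¹) by field_simp, Real.mul_rpow hn.le (by positivity),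
    Real.rpow_add_one hn.ne' p]
  have := (Real.rpow_pos_of_pos hn p).ne'
  field_simp

lemma hasPowerLaw_zero_iff {u : ℕ → ℝ} {c : ℝ} : HasPowerLaw u 0 c ↔ Tendsto u atTop (𝓝 c) := by
  simp only [HasPowerLaw, Real.rpow_zero, div_one]

namespace HasPowerLaw

variable {u v : ℕ → ℝ} {p q c d : ℝ}

lemma congr' (hu : HasPowerLaw u p c) (h : u =ᶠ[atTop] v) : HasPowerLaw v p c :=
  Tendsto.congr' (h.mono fun n hn => by rw [hn]) hu

lemma const_mul (a : ℝ) (hu : HasPowerLaw u p c) : HasPowerLaw (fun n => a * u n) p (a * c) := by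
  simpa only [HasPowerLaw, mul_div_assoc] using Tendsto.const_mul a hu

lemma sub (hu : HasPowerLaw u p c) (hv : HasPowerLaw v p d) :
    HasPowerLaw (fun n => u n - v n) p (c - d) := by
  simpa only [HasPowerLaw, sub_div] using Tendsto.sub hu hv

lemma mul (hu : HasPowerLaw u p c) (hv : HasPowerLaw v q d) :
    HasPowerLaw (fun n => u n * v n) (p + q) (c * d) := by
  refine Tendsto.congr' ?_ (Tendsto.mul hu hv)
  filter_upwards [eventually_natCast_pos] with n hn
  rw [Real.rpow_add hn, mul_div_mul_comm]

lemma div (hu : HasPowerLaw u p c) (hv : HasPowerLaw v q d) (hd : d ≠ 0) :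
    HasPowerLaw (fun n => u n / v n) (p - q) (c / d) := by
  refine Tendsto.congr' ?_ (Tendsto.div hu hv hd)
  filter_upwards [eventually_natCast_pos] with n hn
  rw [Pi.div_apply, Real.rpow_sub hn, div_div_div_comm]

lemma comp_sub_nat (hu : HasPowerLaw u p c) (i : ℕ) :
    HasPowerLaw (fun n => u (n - i)) p c := by
  have hratio : HasPowerLaw (fun n : ℕ => ((n - i : ℕ) : ℝ)) 1 1 := by
    refine (hasPowerLaw_linear 1 (-i)).congr' ?_
    filter_upwards [eventually_ge_atTop i] with n hn
    push_cast [hn]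
    ring
  have h := (Tendsto.comp hu (tendsto_sub_atTop_nat i)).mul
    (hratio.rpow_const (p := p) (Or.inl one_ne_zero))
  rw [Real.one_rpow, mul_one] at h
  refine h.congr' ?_
  filter_upwards [eventually_natCast_pos, (tendsto_sub_atTop_nat i).eventually
    eventually_natCast_pos] with n hn hni
  rw [Function.comp_apply, Real.rpow_one, Real.div_rpow hni.le hn.le,
    div_mul_div_cancel₀ (Real.rpow_pos_of_pos hni p).ne']

lemma eventually_ne_zero (hu : HasPowerLaw u p c) (hc : c ≠ 0) :
    ∀ᶠ n in atTop, u n ≠ 0 :=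
  (Tendsto.eventually_ne hu hc).mono fun _ hn h => hn (by rw [h, zero_div])

/- Stolz–Cesàro against the telescoping sum of `(i + 1) ^ (p + 1) - i ^ (p + 1)`. -/
lemma sum_range (hu : HasPowerLaw u p c) (hp : -1 < p) :
    HasPowerLaw (fun n => ∑ i ∈ Finset.range n, u i) (p + 1) (c / (p + 1)) := by
  have hp' : 0 < p + 1 := by linarith
  set g : ℕ → ℝ := fun i => ((i : ℝ) + 1) ^ (p + 1) - (i : ℝ) ^ (p + 1)
  have hg_pos (i : ℕ) : 0 < g i :=
    sub_pos.2 (Real.rpow_lt_rpow i.cast_nonneg (lt_add_one _) hp')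
  have hg_sum (n : ℕ) : ∑ i ∈ Finset.range n, g i = (n : ℝ) ^ (p + 1) := by
    have h := Finset.sum_range_sub (fun i : ℕ => (i : ℝ) ^ (p + 1)) n
    push_cast at h
    rwa [Real.zero_rpow hp'.ne', sub_zero] at h
  have ho : (fun n => u n - c / (p + 1) * g n) =o[atTop] g := by
    refine (Asymptotics.isLittleO_iff_tendsto fun n h => absurd h (hg_pos n).ne').2 ?_
    have h := (hu.div (hasPowerLaw_add_one_rpow_sub_rpow p) hp'.ne').sub_const (c / (p + 1))
    rw [sub_self (_ / _)] at h
    refine h.congr fun n => ?_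
    rw [sub_self, Real.rpow_zero, div_one, sub_div, mul_div_cancel_right₀ _ (hg_pos n).ne']
  have hsum := ho.sum_range (fun i => (hg_pos i).le) (by
    simpa only [hg_sum, Function.comp_def] using
      (tendsto_rpow_atTop hp').comp tendsto_natCast_atTop_atTop)
  have h := hsum.tendsto_div_nhds_zero.add_const (c / (p + 1))
  rw [zero_add] at h
  refine h.congr' ?_
  filter_upwards [eventually_natCast_pos] with n hn
  rw [Finset.sum_sub_distrib, ← Finset.mul_sum, hg_sum, sub_div,
    mul_div_cancel_right₀ _ (Real.rpow_pos_of_pos hn _).ne', sub_add_cancel]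

lemma exists_tendsto_div_one_add (hu : HasPowerLaw u p c)
    (hc : 0 < c) : ∃ L, Tendsto (fun n => u n / (1 + u n)) atTop (𝓝 L) := by
  have hu_eq : ∀ᶠ n : ℕ in atTop, u n / (n : ℝ) ^ p * (n : ℝ) ^ p = u n := by
    filter_upwards [eventually_natCast_pos] with n hn
    exact div_mul_cancel₀ _ (Real.rpow_pos_of_pos hn p).ne'
  have of_tendsto {l : ℝ} (hl : 0 ≤ l) (h : Tendsto u atTop (𝓝 l)) :
      ∃ L, Tendsto (fun n => u n / (1 + u n)) atTop (𝓝 L) :=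
    ⟨_, h.div (h.const_add 1) (by positivity)⟩
  rcases lt_trichotomy p 0 with hp | rfl | hp
  · have hpow : Tendsto (fun n : ℕ => (n : ℝ) ^ p) atTop (𝓝 0) := by
      simpa [Function.comp_def] using
        (tendsto_rpow_neg_atTop (neg_pos.2 hp)).comp tendsto_natCast_atTop_atTop
    exact of_tendsto (mul_zero c).ge ((Tendsto.mul hu hpow).congr' hu_eq)
  · exact of_tendsto hc.le (hasPowerLaw_zero_iff.1 hu)
  · have htop : Tendsto u atTop atTop :=
      (Tendsto.pos_mul_atTop hc hu
        ((tendsto_rpow_atTop hp).comp tendsto_natCast_atTop_atTop)).congr' hu_eq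
    have h := (htop.inv_tendsto_atTop.add_const 1).inv₀ (by norm_num)
    refine ⟨_, h.congr' ?_⟩
    filter_upwards [htop.eventually_gt_atTop 0] with n hn
    rw [Pi.inv_apply]
    field_simp

end HasPowerLaw

lemma Gamma_natCast_add_add_one {s : ℝ} (hs : 0 < s) (n : ℕ) :
    Real.Gamma (n + s + 1) = (∏ i ∈ Finset.range (n + 1), (s + i)) * Real.Gamma s := by
  induction n with
  | zero => simp [Real.Gamma_add_one hs.ne']
  | succ n ih =>
    push_cast
    rw [Finset.prod_range_succ, mul_right_comm, ← ih, add_right_comm (n : ℝ) 1 s,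
      Real.Gamma_add_one (by positivity)]
    push_cast
    ring

lemma hasPowerLaw_Gamma_add_div_factorial (s : ℝ) :
    HasPowerLaw (fun n => Real.Gamma (n + s + 1) / n !) s 1 := by
  have of_pos {s : ℝ} (hs : 0 < s) : HasPowerLaw (fun n => Real.Gamma (n + s + 1) / n !) s 1 := by
    have hΓ := (Real.Gamma_pos_of_pos hs).ne'
    have h := ((Real.GammaSeq_tendsto_Gamma s).inv₀ hΓ).const_mul (Real.Gamma s)
    rw [mul_inv_cancel₀ hΓ] at h
    refine h.congr fun n => ?_
    beta_reduce
    rw [Gamma_natCast_add_add_one hs, Real.GammaSeq, inv_div]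
    ring
  have of_add_one {s : ℝ}
      (h : HasPowerLaw (fun n => Real.Gamma (n + (s + 1) + 1) / n !) (s + 1) 1) :
      HasPowerLaw (fun n => Real.Gamma (n + s + 1) / n !) s 1 := by
    have h' := h.div (hasPowerLaw_linear 1 (s + 1)) one_ne_zero
    rw [add_sub_cancel_right, div_one] at h'
    refine h'.congr' ?_
    filter_upwards [(tendsto_natCast_atTop_atTop (R := ℝ)).eventually_gt_atTop (-(s + 1))] with n hn
    have hne : (n : ℝ) + s + 1 ≠ 0 := by linarith
    rw [one_mul, ← add_assoc, Real.Gamma_add_one hne, mul_div_assoc, mul_div_cancel_left₀ _ hne]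
  have of_nat_shift (N : ℕ) :
      ∀ s : ℝ, 0 < s + N → HasPowerLaw (fun n => Real.Gamma (n + s + 1) / n !) s 1 := by
    induction N with
    | zero => exact fun s hs => of_pos (by simpa using hs)
    | succ N ih => exact fun s hs => of_add_one (ih _ (by push_cast at hs; linarith))
  obtain ⟨N, hN⟩ := exists_nat_gt (-s)
  exact of_nat_shift N s (by linarith)

lemma hasPowerLaw_Gamma_div_Gamma (a b : ℝ) :
    HasPowerLaw (fun n => Real.Gamma (n + a) / Real.Gamma (n + b)) (a - b) 1 := by
  have h := (hasPowerLaw_Gamma_add_div_factorial (a - 1)).div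
    (hasPowerLaw_Gamma_add_div_factorial (b - 1)) one_ne_zero
  rw [sub_sub_sub_cancel_right, div_one] at h
  refine h.congr' (Eventually.of_forall fun n => ?_)
  simp only [add_sub, sub_add_cancel]
  exact div_div_div_cancel_right₀ (by positivity) _ _

/-! ### Generalized binomial coefficients -/

lemma Gamma_add_one_eq_factorial_mul_ringChoose {r : ℝ} {k : ℕ} (h : (k : ℝ) < r + 1) :
    Real.Gamma (r + 1) = k ! * Ring.choose r k * Real.Gamma (r - k + 1) := by
  induction k with
  | zero => simp
  | succ k ih =>
    push_cast at h
    have hchoose := Ring.choose_smul_choose r (Nat.le_add_right k 1)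
    rw [Nat.choose_succ_self_right, Nat.add_sub_cancel_left, Ring.choose_one_right,
      nsmul_eq_mul] at hchoose
    rw [ih (by linarith), Real.Gamma_add_one (by linarith : r - k ≠ 0), Nat.factorial_succ]
    push_cast at hchoose ⊢
    rw [show r - (k + 1) + 1 = r - k by ring]
    linear_combination -k ! * Real.Gamma (r - k) * hchoose

lemma ringChoose_eq_Gamma_div {r : ℝ} {k : ℕ} (h : (k : ℝ) < r + 1) :
    Ring.choose r k = Real.Gamma (r + 1) / (k ! * Real.Gamma (r - k + 1)) := by
  have hΓ := (Real.Gamma_pos_of_pos (by linarith : 0 < r - k + 1)).ne'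
  rw [Gamma_add_one_eq_factorial_mul_ringChoose h]
  field_simp

lemma hasPowerLaw_ringChoose_sub {a : ℝ} (ha : -1 < a) (k : ℕ) :
    HasPowerLaw (fun n => Ring.choose (n + a) (n - k)) (a + k) (1 / Real.Gamma (a + k + 1)) := by
  have h := (hasPowerLaw_Gamma_div_Gamma (a + 1) (1 - k)).const_mul (1 / Real.Gamma (a + k + 1))
  rw [show a + 1 - (1 - k) = a + k by ring, mul_one] at h
  refine h.congr' ?_
  filter_upwards [eventually_ge_atTop k] with n hn
  rw [ringChoose_eq_Gamma_div (by push_cast [hn]; linarith [k.cast_nonneg (α := ℝ)]),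
    ← Real.Gamma_nat_eq_factorial]
  push_cast [hn]
  rw [show n + a - (n - k) + 1 = a + k + 1 by ring, show (n : ℝ) - k + 1 = n + (1 - k) by ring,
    add_assoc (n : ℝ) a 1]
  ring

lemma hasPowerLaw_ringChoose_add (a : ℝ) (k : ℕ) :
    HasPowerLaw (fun n => Ring.choose (n + a) k) k (1 / k !) := by
  have h := (hasPowerLaw_Gamma_div_Gamma (a + 1) (a + 1 - k)).const_mul (1 / k ! : ℝ)
  rw [sub_sub_cancel, mul_one] at h
  refine h.congr' ?_
  filter_upwards [tendsto_natCast_atTop_atTop.eventually_gt_atTop (k - a - 1 : ℝ)] with n hn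
  rw [ringChoose_eq_Gamma_div (by linarith), add_assoc,
    show n + a - k + 1 = n + (a + 1 - k) by ring]
  ring

section FwdDiff

variable {R : Type*} [CommRing R] [BinomialRing R]

lemma fwdDiff_ringChoose_succ (m : ℕ) :
    fwdDiff (1 : R) (Ring.choose · (m + 1)) = (Ring.choose · m) := by
  ext x
  rw [fwdDiff, Ring.choose_succ_succ, add_sub_cancel_right]

lemma fwdDiff_iter_ringChoose {m n : ℕ} (h : m ≤ n) :
    (fwdDiff (1 : R))^[n] (Ring.choose · m) = fun _ => if m = n then 1 else 0 := by
  induction n generalizing m with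
  | zero => simp [Nat.le_zero.1 h]
  | succ n ih =>
    rw [Function.iterate_succ_apply]
    cases m with
    | zero =>
      simp only [Ring.choose_zero_right, fwdDiff_const,
        Function.iterate_fixed (fwdDiff_const (1 : R) (0 : R))]
      simp
    | succ m => simp [fwdDiff_ringChoose_succ, ih (Nat.le_of_succ_le_succ h)]

lemma sum_neg_one_pow_mul_choose_mul_ringChoose {m n : ℕ} (h : m ≤ n) (x : R) :
    ∑ k ∈ Finset.range (n + 1), (-1) ^ k * (n.choose k : R) * Ring.choose (x + k) m =
      if m = n then (-1) ^ n else 0 := by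
  have hiter := congrFun (fwdDiff_iter_ringChoose (R := R) h) x
  rw [fwdDiff_iter_eq_sum_shift] at hiter
  rw [← mul_one ((-1 : R) ^ n), ← mul_zero ((-1 : R) ^ n), ← mul_ite, ← hiter, Finset.mul_sum]
  refine Finset.sum_congr rfl fun k hk => ?_
  have hsign : (-1 : R) ^ k = (-1) ^ n * (-1) ^ (n - k) := by
    obtain ⟨d, rfl⟩ := Nat.exists_eq_add_of_le (Finset.mem_range_succ_iff.1 hk)
    rw [Nat.add_sub_cancel_left, pow_add, mul_assoc, ← mul_pow, neg_one_mul, neg_neg, one_pow,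
      mul_one]
  rw [hsign, nsmul_one]
  simp [mul_assoc]

end FwdDiff

/-! ### Taylor coefficients -/

lemma eval_iterate_derivative_eq_factorial_mul_coeff_taylor {R : Type*} [CommSemiring R]
    (p : R[X]) (r : R) (k : ℕ) :
    (derivative^[k] p).eval r = k ! * (taylor r p).coeff k := by
  rw [taylor_coeff, ← factorial_smul_hasseDeriv, LinearMap.smul_apply, eval_smul, nsmul_eq_mul]

lemma eq_sum_range_coeff_taylor {R : Type*} [CommRing R] {p : R[X]} {n : ℕ}
    (hp : p.natDegree ≤ n) (r : R) :
    p = ∑ m ∈ Finset.range (n + 1), C ((taylor r p).coeff m) * (X - C r) ^ m := by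
  conv_lhs => rw [← sum_taylor_eq p r]
  refine sum_over_range' _ (fun m => ?_) _ ?_
  · rw [C_0, zero_mul]
  · rw [natDegree_taylor]
    exact Nat.lt_succ_of_le hp

lemma coeff_taylor_one_sub_X_pow_mul {R : Type*} [CommRing R] (p : R[X]) (i k : ℕ) :
    (taylor 1 ((1 - X) ^ i * p)).coeff k =
      if i ≤ k then (-1) ^ i * (taylor 1 p).coeff (k - i) else 0 := by
  have hpow : taylor 1 ((1 - X : R[X]) ^ i) = C ((-1) ^ i) * X ^ i := by
    simp [taylor_pow, ← mul_pow]
  rw [taylor_mul, hpow, mul_assoc, coeff_C_mul, coeff_X_pow_mul', mul_ite, mul_zero]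

lemma coeff_taylor_one_X_sub_one_pow_mul_X_add_one_pow (k l m : ℕ) :
    (taylor 1 ((C (2⁻¹ : ℝ) * (X - 1)) ^ l * (C (2⁻¹ : ℝ) * (X + 1)) ^ m)).coeff k =
      if l ≤ k then (m.choose (k - l) : ℝ) / 2 ^ k else 0 := by
  have hcomp : taylor 1 ((C (2⁻¹ : ℝ) * (X - 1)) ^ l * (C (2⁻¹ : ℝ) * (X + 1)) ^ m) =
      (X ^ l * (1 + X) ^ m).comp (C (2⁻¹ : ℝ) * X) := by
    have hv : C (2⁻¹ : ℝ) * (X + 1 + 1) = 1 + C (2⁻¹ : ℝ) * X := by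
      rw [add_assoc, mul_add, ← C_1, ← C_add, ← C_mul, add_comm]
      norm_num
    simp [taylor_apply, hv]
  rw [hcomp, comp_C_mul_X_coeff, coeff_X_pow_mul', coeff_one_add_X_pow]
  simp [ite_mul, div_eq_mul_inv]

/-! ### Jacobi polynomials -/

section Jacobi

variable {α β : ℝ}

lemma jacobiP_eq_sum_ringChoose (hα : -1 < α) (hβ : -1 < β) (n : ℕ) :
    jacobiP α β n = ∑ k ∈ Finset.range (n + 1),
      C (Ring.choose (n + α) (n - k) * Ring.choose (n + β) k) *
        (C (2⁻¹ : ℝ) * (X - 1)) ^ k * (C (2⁻¹ : ℝ) * (X + 1)) ^ (n - k) := by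
  refine Finset.sum_congr rfl fun k hk => ?_
  have hkn : k ≤ n := Finset.mem_range_succ_iff.1 hk
  have hkn' : (k : ℝ) ≤ n := by exact_mod_cast hkn
  rw [ringChoose_eq_Gamma_div (by push_cast [hkn]; linarith [k.cast_nonneg (α := ℝ)]),
    ringChoose_eq_Gamma_div (by linarith), ← Real.Gamma_nat_eq_factorial,
    ← Real.Gamma_nat_eq_factorial]
  push_cast [hkn]
  rw [show n + α - (n - k) + 1 = α + k + 1 by ring, show n + β - k + 1 = n - k + β + 1 by ring]

lemma coeff_taylor_one_jacobiP (hα : -1 < α) (hβ : -1 < β) {n k : ℕ} (hkn : k ≤ n) :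
    (taylor 1 (jacobiP α β n)).coeff k =
      Ring.choose (n + α) (n - k) * Ring.choose (n + k + α + β) k / 2 ^ k := by
  have hterm {l : ℕ} (hl : l ≤ k) :
      Ring.choose (n + α) (n - l) * ((n - l).choose (k - l) : ℝ) =
        Ring.choose (n + α) (n - k) * Ring.choose (k + α) (k - l) := by
    have h := Ring.choose_smul_choose (n + α) (Nat.sub_le_sub_left hl n)
    rw [nsmul_eq_mul, Nat.choose_symm_of_eq_add (by omega : n - l = (n - k) + (k - l)),
      show n - l - (n - k) = k - l by omega] at h
    rw [mul_comm, h]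
    push_cast [hkn]
    ring_nf
  rw [jacobiP_eq_sum_ringChoose hα hβ, map_sum, finsetSum_coeff,
    show (n + k + α + β : ℝ) = (n + β) + (k + α) by ring, Ring.add_choose_eq k (Commute.all _ _),
    Finset.Nat.sum_antidiagonal_eq_sum_range_succ
      (fun l m => Ring.choose (n + β) l * Ring.choose (k + α) m), Finset.mul_sum, Finset.sum_div]
  refine (Finset.sum_subset_zero_on_sdiff (by simpa using hkn) (fun l hl => ?_)
    fun l hl => ?_).symm
  · simp only [Finset.mem_sdiff, Finset.mem_range] at hl
    rw [mul_assoc, taylor_mul, taylor_C, coeff_C_mul,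
      coeff_taylor_one_X_sub_one_pow_mul_X_add_one_pow, if_neg (by omega), mul_zero]
  · have hlk : l ≤ k := Finset.mem_range_succ_iff.1 hl
    rw [mul_assoc, taylor_mul, taylor_C, coeff_C_mul,
      coeff_taylor_one_X_sub_one_pow_mul_X_add_one_pow, if_pos hlk]
    linear_combination -Ring.choose (n + β) l / 2 ^ k * hterm hlk

lemma eval_one_jacobiP_pos (hα : -1 < α) (hβ : -1 < β) (n : ℕ) :
    0 < (jacobiP α β n).eval 1 := by
  have h : (jacobiP α β n).eval 1 = Ring.choose (n + α) n := by
    simpa [coeff_taylor_one_jacobiP hα hβ n.zero_le] using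
      eval_iterate_derivative_eq_factorial_mul_coeff_taylor (jacobiP α β n) 1 0
  have := n.cast_nonneg (α := ℝ)
  rw [h, ringChoose_eq_Gamma_div (by linarith), add_sub_cancel_left]
  have hnum := Real.Gamma_pos_of_pos (by linarith : 0 < n + α + 1)
  have hden := Real.Gamma_pos_of_pos (by linarith : 0 < α + 1)
  positivity

lemma hasPowerLaw_coeff_taylor_jacobiP (hα : -1 < α) (hβ : -1 < β) (k : ℕ) :
    HasPowerLaw (fun n => (taylor 1 (jacobiP α β n)).coeff k) (α + 2 * k)
      (1 / (2 ^ k * k ! * Real.Gamma (α + k + 1))) := by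
  have h := ((hasPowerLaw_ringChoose_sub hα k).mul
    (hasPowerLaw_ringChoose_add (k + α + β) k)).const_mul (1 / 2 ^ k)
  rw [show α + k + k = α + 2 * k by ring,
    show 1 / 2 ^ k * (1 / Real.Gamma (α + k + 1) * (1 / k !)) =
      1 / (2 ^ k * k ! * Real.Gamma (α + k + 1)) by ring] at h
  refine h.congr' ?_
  filter_upwards [eventually_ge_atTop k] with n hn
  rw [coeff_taylor_one_jacobiP hα hβ hn, one_div_mul_eq_div]
  simp only [← add_assoc]

lemma exists_hasPowerLaw_iterate_derivative_jacobiP (hα : -1 < α) (hβ : -1 < β)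
    (k : ℕ) :
    ∃ c > 0, HasPowerLaw (fun n => (derivative^[k] (jacobiP α β n)).eval 1) (α + 2 * k) c := by
  have hΓ := Real.Gamma_pos_of_pos (by linarith [k.cast_nonneg (α := ℝ)] : 0 < α + k + 1)
  refine ⟨k ! * (1 / (2 ^ k * k ! * Real.Gamma (α + k + 1))), by positivity, ?_⟩
  simpa only [eval_iterate_derivative_eq_factorial_mul_coeff_taylor] using
    (hasPowerLaw_coeff_taylor_jacobiP hα hβ k).const_mul (k ! : ℝ)

lemma integral_one_sub_rpow_mul_one_add_rpow {a b : ℝ} (ha : -1 < a) (hb : -1 < b) :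
    ∫ x in (-1 : ℝ)..1, (1 - x) ^ a * (1 + x) ^ b =
      2 ^ (a + b + 1) * ProbabilityTheory.beta (a + 1) (b + 1) := by
  have hshift : ∫ x in (-1 : ℝ)..1, (1 - x) ^ a * (1 + x) ^ b =
      ∫ x in (0 : ℝ)..2, x ^ b * (2 - x) ^ a := by
    have h := intervalIntegral.integral_comp_add_right (a := -1) (b := 1)
      (fun x : ℝ => x ^ b * (2 - x) ^ a) 1
    norm_num at h
    rw [← h]
    congr with x
    rw [mul_comm, add_comm x]
    ring_nf
  have hscaled := Complex.betaIntegral_scaled ((b + 1 : ℝ) : ℂ) ((a + 1 : ℝ) : ℂ) two_pos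
  have hcast : ∫ x in (0 : ℝ)..2, (x : ℂ) ^ (((b + 1 : ℝ) : ℂ) - 1) *
      (((2 : ℝ) : ℂ) - x) ^ (((a + 1 : ℝ) : ℂ) - 1) =
        ((∫ x in (0 : ℝ)..2, x ^ b * (2 - x) ^ a : ℝ) : ℂ) := by
    rw [← intervalIntegral.integral_ofReal]
    refine intervalIntegral.integral_congr fun x hx => ?_
    rw [Set.uIcc_of_le zero_le_two] at hx
    rw [Complex.ofReal_mul, Complex.ofReal_cpow hx.1, Complex.ofReal_cpow (by linarith [hx.2])]
    push_cast
    simp only [add_sub_cancel_right]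
  rw [hcast, Complex.betaIntegral_eq_Gamma_mul_div _ _ (by rw [Complex.ofReal_re]; linarith)
      (by rw [Complex.ofReal_re]; linarith),
    ← Complex.ofReal_add, Complex.Gamma_ofReal, Complex.Gamma_ofReal, Complex.Gamma_ofReal,
    ← Complex.ofReal_one, ← Complex.ofReal_sub, ← Complex.ofReal_cpow zero_le_two] at hscaled
  rw [hshift, ProbabilityTheory.beta]
  norm_cast at hscaled
  rw [hscaled]
  ring_nf

lemma intervalIntegrable_one_sub_rpow_mul_one_add_rpow {a b : ℝ} (ha : -1 < a) (hb : -1 < b) :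
    IntervalIntegrable (fun x : ℝ => (1 - x) ^ a * (1 + x) ^ b) MeasureTheory.volume (-1) 1 := by
  by_contra h
  have hbeta := ProbabilityTheory.beta_pos (by linarith : 0 < a + 1) (by linarith : 0 < b + 1)
  have hpos : 0 < ∫ x in (-1 : ℝ)..1, (1 - x) ^ a * (1 + x) ^ b := by
    rw [integral_one_sub_rpow_mul_one_add_rpow ha hb]
    positivity
  exact hpos.ne' (intervalIntegral.integral_undef h)

/-- The integral of the polynomial `p` against the Jacobi weight on `[-1, 1]`. -/
noncomputable def jacobiIntegral (α β : ℝ) (p : ℝ[X]) : ℝ :=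
  ∫ x in (-1 : ℝ)..1, p.eval x * ((1 - x) ^ α * (1 + x) ^ β)

lemma jacobiIntegral_sum {ι : Type*} (hα : -1 < α) (hβ : -1 < β) (s : Finset ι)
    (p : ι → ℝ[X]) :
    jacobiIntegral α β (∑ i ∈ s, p i) = ∑ i ∈ s, jacobiIntegral α β (p i) := by
  simp only [jacobiIntegral, eval_finsetSum, Finset.sum_mul]
  exact intervalIntegral.integral_finsetSum fun i _ =>
    (intervalIntegrable_one_sub_rpow_mul_one_add_rpow hα hβ).continuousOn_mul
      (p i).continuous.continuousOn

lemma jacobiIntegral_C_mul (α β c : ℝ) (p : ℝ[X]) :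
    jacobiIntegral α β (C c * p) = c * jacobiIntegral α β p := by
  simp only [jacobiIntegral, eval_mul, eval_C, mul_assoc, intervalIntegral.integral_const_mul]

lemma jacobiIntegral_X_sub_one_pow_mul_X_add_one_pow (hα : -1 < α) (hβ : -1 < β) (k l : ℕ) :
    jacobiIntegral α β ((C (2⁻¹ : ℝ) * (X - 1)) ^ k * (C (2⁻¹ : ℝ) * (X + 1)) ^ l) =
      (-1) ^ k * 2 ^ (α + β + 1) * ProbabilityTheory.beta (α + k + 1) (β + l + 1) := by
  have hpow : (2 : ℝ) ^ (α + k + (β + l) + 1) = 2 ^ (α + β + 1) * 2 ^ k * 2 ^ l := by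
    rw [show α + k + (β + l) + 1 = α + β + 1 + k + l by ring, Real.rpow_add two_pos,
      Real.rpow_add two_pos, Real.rpow_natCast, Real.rpow_natCast]
  have h := integral_one_sub_rpow_mul_one_add_rpow
    (by linarith [k.cast_nonneg (α := ℝ)] : -1 < α + k)
    (by linarith [l.cast_nonneg (α := ℝ)] : -1 < β + l)
  have hweight : jacobiIntegral α β ((C (2⁻¹ : ℝ) * (X - 1)) ^ k * (C (2⁻¹ : ℝ) * (X + 1)) ^ l) =
      ∫ x in (-1 : ℝ)..1,
        (-1) ^ k / (2 ^ k * 2 ^ l) * ((1 - x) ^ (α + k) * (1 + x) ^ (β + l)) := by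
    rw [jacobiIntegral, intervalIntegral.integral_of_le (by norm_num),
      intervalIntegral.integral_of_le (by norm_num), MeasureTheory.integral_Ioc_eq_integral_Ioo,
      MeasureTheory.integral_Ioc_eq_integral_Ioo]
    refine MeasureTheory.setIntegral_congr_fun measurableSet_Ioo fun x hx => ?_
    simp only [eval_mul, eval_pow, eval_sub, eval_add, eval_one, eval_X, eval_C]
    rw [Real.rpow_add_natCast (by linarith [hx.2]), Real.rpow_add_natCast (by linarith [hx.1]),
      show (2⁻¹ : ℝ) * (x - 1) = -1 * (1 - x) / 2 by ring,
      show (2⁻¹ : ℝ) * (x + 1) = (1 + x) / 2 by ring, div_pow, div_pow, mul_pow]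
    ring
  rw [hweight, intervalIntegral.integral_const_mul, h, hpow]
  field_simp

lemma ringChoose_mul_ringChoose_mul_beta (hα : -1 < α) (hβ : -1 < β) {n k : ℕ} (hkn : k ≤ n)
    (m : ℕ) :
    Ring.choose (n + α) (n - k) * Ring.choose (n + β) k *
        ProbabilityTheory.beta (α + (m + k : ℕ) + 1) (β + (n - k : ℕ) + 1) =
      m ! / n ! * (Real.Gamma (n + α + 1) * Real.Gamma (n + β + 1) /
        Real.Gamma (α + β + m + n + 2)) * (n.choose k * Ring.choose (α + m + k) m) := by
  have := k.cast_nonneg (α := ℝ)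
  have hkn' : (k : ℝ) ≤ n := by exact_mod_cast hkn
  have hα_pos := Real.Gamma_pos_of_pos (by linarith : 0 < α + k + 1)
  have hβ_pos := Real.Gamma_pos_of_pos (by linarith : 0 < n + β - k + 1)
  rw [ringChoose_eq_Gamma_div (by push_cast [hkn]; linarith), ringChoose_eq_Gamma_div (by linarith),
    Nat.cast_choose ℝ hkn, ProbabilityTheory.beta]
  push_cast [hkn]
  rw [← add_assoc,
    Gamma_add_one_eq_factorial_mul_ringChoose (by linarith : (m : ℝ) < α + m + k + 1),
    show n + α - (n - k) + 1 = α + k + 1 by ring, show α + m + k - m + 1 = α + k + 1 by ring,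
    show β + (n - k) + 1 = n + β - k + 1 by ring,
    show α + m + k + 1 + (n + β - k + 1) = α + β + m + n + 2 by ring]
  field_simp

lemma jacobiIntegral_X_sub_one_pow_mul_jacobiP (hα : -1 < α) (hβ : -1 < β) {m n : ℕ}
    (hmn : m ≤ n) :
    jacobiIntegral α β ((X - 1) ^ m * jacobiP α β n) =
      if m = n then 2 ^ n * 2 ^ (α + β + 1) * ProbabilityTheory.beta (n + α + 1) (n + β + 1)
      else 0 := by
  have hterm {k : ℕ} (hk : k ≤ n) :
      jacobiIntegral α β ((X - 1) ^ m * (C (Ring.choose (n + α) (n - k) * Ring.choose (n + β) k) *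
        (C (2⁻¹ : ℝ) * (X - 1)) ^ k * (C (2⁻¹ : ℝ) * (X + 1)) ^ (n - k))) =
      2 ^ m * 2 ^ (α + β + 1) * (m ! / n ! * (Real.Gamma (n + α + 1) * Real.Gamma (n + β + 1) /
        Real.Gamma (α + β + m + n + 2))) * (-1) ^ m *
          ((-1) ^ k * n.choose k * Ring.choose (α + m + k) m) := by
    have hX : (X - 1 : ℝ[X]) ^ m = C (2 ^ m) * (C (2⁻¹ : ℝ) * (X - 1)) ^ m := by
      rw [C_pow, ← mul_pow, ← mul_assoc, ← C_mul]
      simp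
    rw [hX, mul_assoc (C _) (_ ^ k), mul_mul_mul_comm, ← mul_assoc (_ ^ m), ← pow_add, ← C_mul,
      jacobiIntegral_C_mul, jacobiIntegral_X_sub_one_pow_mul_X_add_one_pow hα hβ]
    linear_combination 2 ^ m * 2 ^ (α + β + 1) * (-1) ^ (m + k) *
      ringChoose_mul_ringChoose_mul_beta hα hβ hk m
  rw [jacobiP_eq_sum_ringChoose hα hβ, Finset.mul_sum, jacobiIntegral_sum hα hβ,
    Finset.sum_congr rfl fun k hk => hterm (Finset.mem_range_succ_iff.1 hk), ← Finset.mul_sum,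
    sum_neg_one_pow_mul_choose_mul_ringChoose hmn]
  split_ifs with h
  · subst h
    rw [ProbabilityTheory.beta, div_self (by positivity), one_mul, mul_assoc _ ((-1 : ℝ) ^ m),
      ← mul_pow, neg_one_mul, neg_neg, one_pow, mul_one,
      show m + α + 1 + (m + β + 1) = α + β + m + m + 2 by ring]
  · rw [mul_zero]

lemma natDegree_jacobiP_le (α β : ℝ) (n : ℕ) : (jacobiP α β n).natDegree ≤ n := by
  refine natDegree_sum_le_of_forall_le _ _ fun k hk => ?_
  have hsum : 0 + k * 1 + (n - k) * 1 = n := by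
    have := Finset.mem_range_succ_iff.1 hk
    omega
  refine (natDegree_mul_le_of_le (natDegree_mul_le_of_le (natDegree_C _).le
    (natDegree_pow_le_of_le k ?_)) (natDegree_pow_le_of_le (n - k) ?_)).trans hsum.le
  all_goals compute_degree

lemma jacobiNormSq_eq (hα : -1 < α) (hβ : -1 < β) (n : ℕ) :
    jacobiNormSq α β n = 2 ^ (α + β + 1) * Ring.choose (n + n + α + β) n *
      ProbabilityTheory.beta (n + α + 1) (n + β + 1) := by
  have hexpand : jacobiP α β n * jacobiP α β n = ∑ m ∈ Finset.range (n + 1),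
      C ((taylor 1 (jacobiP α β n)).coeff m) * ((X - 1) ^ m * jacobiP α β n) := by
    conv_lhs =>
      arg 1
      rw [eq_sum_range_coeff_taylor (natDegree_jacobiP_le α β n) 1]
    simp only [Finset.sum_mul, mul_assoc, C_1]
  have hnorm : jacobiNormSq α β n = jacobiIntegral α β (jacobiP α β n * jacobiP α β n) := by
    simp only [jacobiNormSq, jacobiIntegral, eval_mul, sq, mul_assoc]
  rw [hnorm, hexpand, jacobiIntegral_sum hα hβ, Finset.sum_range_succ,
    Finset.sum_eq_zero, zero_add, jacobiIntegral_C_mul,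
    jacobiIntegral_X_sub_one_pow_mul_jacobiP hα hβ le_rfl, if_pos rfl,
    coeff_taylor_one_jacobiP hα hβ le_rfl, Nat.sub_self, Ring.choose_zero_right]
  · field_simp
  · intro m hm
    have hmn : m < n := Finset.mem_range.1 hm
    rw [jacobiIntegral_C_mul, jacobiIntegral_X_sub_one_pow_mul_jacobiP hα hβ hmn.le,
      if_neg hmn.ne, mul_zero]

lemma hasPowerLaw_jacobiNormSq (hα : -1 < α) (hβ : -1 < β) :
    HasPowerLaw (jacobiNormSq α β) (-1) (2 ^ (α + β)) := by
  have h := (((hasPowerLaw_Gamma_div_Gamma (α + 1) 1).mul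
    (hasPowerLaw_Gamma_div_Gamma (β + 1) (α + β + 1))).div
      (hasPowerLaw_linear 2 (α + β + 1)) two_ne_zero).const_mul (2 ^ (α + β + 1))
  rw [show α + 1 - 1 + (β + 1 - (α + β + 1)) - 1 = -1 by ring, Real.rpow_add_one two_ne_zero,
    show (2 : ℝ) ^ (α + β) * 2 * (1 * 1 / 2) = 2 ^ (α + β) by ring] at h
  refine h.congr' ?_
  filter_upwards [eventually_ge_atTop 1] with n hn
  have hn' : (1 : ℝ) ≤ n := by exact_mod_cast hn
  have hden : 2 * n + (α + β + 1) ≠ 0 := by linarith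
  rw [jacobiNormSq_eq hα hβ, ringChoose_eq_Gamma_div (by linarith), ProbabilityTheory.beta,
    Real.rpow_add_one two_ne_zero, ← Real.Gamma_nat_eq_factorial,
    show n + α + 1 + (n + β + 1) = 2 * n + (α + β + 1) + 1 by ring, Real.Gamma_add_one hden,
    show n + n + α + β + 1 = 2 * n + (α + β + 1) by ring,
    show n + n + α + β - n + 1 = n + (α + β + 1) by ring, add_assoc (n : ℝ) α,
    add_assoc (n : ℝ) β]
  have hΓ := Real.Gamma_pos_of_pos (by linarith : 0 < 2 * n + (α + β + 1))
  field_simp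

lemma exists_hasPowerLaw_kernK (hα : -1 < α) (hβ : -1 < β) (j k : ℕ) :
    ∃ c > 0, HasPowerLaw (fun n => kernK α β j k (n - 1) 1 1) (2 * α + 2 * j + 2 * k + 2) c := by
  obtain ⟨a, ha, hj⟩ := exists_hasPowerLaw_iterate_derivative_jacobiP hα hβ j
  obtain ⟨b, hb, hk⟩ := exists_hasPowerLaw_iterate_derivative_jacobiP hα hβ k
  have hp : -1 < α + 2 * j + (α + 2 * k) - -1 := by
    linarith [j.cast_nonneg (α := ℝ), k.cast_nonneg (α := ℝ)]
  have h := ((hj.mul hk).div (hasPowerLaw_jacobiNormSq hα hβ) (by positivity)).sum_range hp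
  rw [show α + 2 * j + (α + 2 * k) - -1 + 1 = 2 * α + 2 * j + 2 * k + 2 by ring] at h
  refine ⟨_, div_pos (by positivity) (by linarith), h.congr' ?_⟩
  filter_upwards [eventually_ge_atTop 1] with n hn
  rw [kernK, Nat.sub_add_cancel hn]

lemma eval_one_iterate_derivative_sobQ (α β : ℝ) (j : ℕ) (Ms : ℕ → ℝ) (n k : ℕ) :
    (derivative^[k] (sobQ α β j Ms n)).eval 1 =
      (derivative^[k] (jacobiP α β n)).eval 1 -
        Ms n * (derivative^[j] (jacobiP α β n)).eval 1 / (1 + Ms n * kernK α β j j (n - 1) 1 1) *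
          kernK α β j k (n - 1) 1 1 := by
  have hkernel : (derivative^[k] (kernKPoly α β j (n - 1))).eval 1 =
      kernK α β j k (n - 1) 1 1 := by
    simp only [kernKPoly, kernK, iterate_derivative_sum, iterate_derivative_C_mul,
      eval_finsetSum, eval_C_mul, div_mul_eq_mul_div]
  rw [sobQ, iterate_derivative_sub, iterate_derivative_C_mul, eval_sub, eval_C_mul, hkernel]

lemma exists_hasPowerLaw_coeff_taylor_sobQ {p M : ℝ} (hα : -1 < α) (hβ : -1 < β) (j : ℕ)
    {Ms : ℕ → ℝ} (hMs : HasPowerLaw Ms p M) (hM : 0 < M) (k : ℕ) :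
    ∃ c, HasPowerLaw (fun n => (taylor 1 (sobQ α β j Ms n)).coeff k) (α + 2 * k) c := by
  obtain ⟨a, -, hj⟩ := exists_hasPowerLaw_iterate_derivative_jacobiP hα hβ j
  obtain ⟨b, -, hk⟩ := exists_hasPowerLaw_iterate_derivative_jacobiP hα hβ k
  obtain ⟨d, hd, hjj⟩ := exists_hasPowerLaw_kernK hα hβ j j
  obtain ⟨e, -, hjk⟩ := exists_hasPowerLaw_kernK hα hβ j k
  obtain ⟨L, hL⟩ := (hMs.mul hjj).exists_tendsto_div_one_add (mul_pos hM hd)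
  have hcorr := (hj.mul (hasPowerLaw_zero_iff.2 hL)).mul (hjk.div hjj hd.ne')
  rw [show α + 2 * j + 0 + (2 * α + 2 * j + 2 * k + 2 - (2 * α + 2 * j + 2 * j + 2)) =
    α + 2 * k by ring] at hcorr
  refine ⟨_, ((hk.sub hcorr).const_mul (1 / k ! : ℝ)).congr' ?_⟩
  filter_upwards [hjj.eventually_ne_zero hd.ne'] with n hn
  have htaylor := eval_iterate_derivative_eq_factorial_mul_coeff_taylor (sobQ α β j Ms n) 1 k
  rw [eval_one_iterate_derivative_sobQ] at htaylor
  have hfact : (k ! : ℝ) ≠ 0 := by positivity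
  field_simp at htaylor ⊢
  linear_combination htaylor

/-! ### The linear system for the connection coefficients -/

lemma tendsto_of_tendsto_mulVec {ι X K : Type*} [Fintype ι] [DecidableEq ι] [Field K]
    [TopologicalSpace K] [IsTopologicalDivisionRing K] [T1Space K] {l : Filter X}
    {A : X → Matrix ι ι K} {A₀ : Matrix ι ι K} {b : X → ι → K} {c : ι → K}
    (hA : Tendsto A l (𝓝 A₀)) (hA₀ : A₀.det ≠ 0) (hb : Tendsto (fun x => A x *ᵥ b x) l (𝓝 c)) :
    Tendsto b l (𝓝 (A₀⁻¹ *ᵥ c)) := by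
  have hinv : Tendsto (fun x => (A x)⁻¹) l (𝓝 A₀⁻¹) := by
    refine (continuousAt_matrix_inv A₀ ?_).tendsto.comp hA
    rw [Ring.inverse_eq_inv']
    exact continuousAt_inv₀ hA₀
  have hmulVec : Continuous fun q : Matrix ι ι K × (ι → K) => q.1 *ᵥ q.2 :=
    continuous_fst.matrix_mulVec continuous_snd
  refine ((hmulVec.tendsto (A₀⁻¹, c)).comp (hinv.prodMk_nhds hb)).congr' ?_
  have hdet : Tendsto (fun x => (A x).det) l (𝓝 A₀.det) :=
    ((Continuous.matrix_det continuous_id).tendsto A₀).comp hA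
  filter_upwards [hdet.eventually_ne hA₀] with x hx
  rw [Function.comp_apply, Matrix.mulVec_mulVec, Matrix.nonsing_inv_mul _ hx.isUnit,
    Matrix.one_mulVec]

/-- The matrix whose `i`-th column consists of the first `N` Taylor coefficients at `1` of
`(1 - X) ^ i * P_{n-i}^{(α+2i,β)}`; it turns the first `N` connection coefficients of a polynomial
into its Taylor coefficients. -/
noncomputable def connectionMatrix (α β : ℝ) (N n : ℕ) : Matrix (Fin N) (Fin N) ℝ :=
  .of fun k i => (taylor 1 ((1 - X) ^ (i : ℕ) * jacobiP (α + 2 * i) β (n - i))).coeff k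

lemma connectionMatrix_mulVec (α β : ℝ) (N n : ℕ) (b : ℕ → ℝ) (k : Fin N) :
    (connectionMatrix α β N n *ᵥ fun i => b i) k = (taylor 1 (∑ i ∈ Finset.range N,
      C (b i) * (1 - X) ^ i * jacobiP (α + 2 * i) β (n - i))).coeff k := by
  simp only [Matrix.mulVec, dotProduct, connectionMatrix, Matrix.of_apply, map_sum,
    finsetSum_coeff, Finset.sum_range, mul_assoc, taylor_mul _ (C _), taylor_C, coeff_C_mul]
  exact Finset.sum_congr rfl fun i _ => mul_comm _ _

lemma isLowerTriangular_connectionMatrix (α β : ℝ) (N n : ℕ) :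
    (connectionMatrix α β N n).IsLowerTriangular := by
  intro k i hki
  rw [connectionMatrix, Matrix.of_apply, coeff_taylor_one_sub_X_pow_mul, if_neg]
  exact not_le.2 hki

lemma det_connectionMatrix_ne_zero (hα : -1 < α) (hβ : -1 < β) (N n : ℕ) :
    (connectionMatrix α β N n).det ≠ 0 := by
  rw [Matrix.det_of_isLowerTriangular _ (isLowerTriangular_connectionMatrix α β N n)]
  refine Finset.prod_ne_zero_iff.2 fun i _ => ?_
  rw [connectionMatrix, Matrix.of_apply, coeff_taylor_one_sub_X_pow_mul, if_pos le_rfl,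
    Nat.sub_self, taylor_coeff_zero]
  have hαi : -1 < α + 2 * (i : ℕ) := by linarith [(i : ℕ).cast_nonneg (α := ℝ)]
  exact mul_ne_zero (pow_ne_zero _ (by norm_num)) (eval_one_jacobiP_pos hαi hβ _).ne'

lemma connection_coeffs_unique (hα : -1 < α) (hβ : -1 < β) {N n : ℕ} {b b' : ℕ → ℝ}
    (h : ∑ i ∈ Finset.range N, C (b i) * (1 - X) ^ i * jacobiP (α + 2 * i) β (n - i) =
      ∑ i ∈ Finset.range N, C (b' i) * (1 - X) ^ i * jacobiP (α + 2 * i) β (n - i))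
    {i : ℕ} (hi : i < N) : b i = b' i := by
  have hinj := Matrix.mulVec_injective_of_isUnit
    ((Matrix.isUnit_iff_isUnit_det _).2 (det_connectionMatrix_ne_zero hα hβ N n).isUnit)
  have heq : (fun i : Fin N => b i) = fun i : Fin N => b' i := hinj <| funext fun k => by
    rw [connectionMatrix_mulVec, connectionMatrix_mulVec, h]
  exact congrFun heq ⟨i, hi⟩

/-- The limit of `connectionMatrix α β N n` as `n → ∞` after dividing its `k`-th row by
`n ^ (α + 2 * k)`. -/
noncomputable def connectionMatrixLimit (α : ℝ) (N : ℕ) : Matrix (Fin N) (Fin N) ℝ :=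
  .of fun k i => if i ≤ k then
    (-1) ^ (i : ℕ) / (2 ^ (k - i : ℕ) * (k - i : ℕ)! * Real.Gamma (α + k + i + 1)) else 0

lemma det_connectionMatrixLimit_ne_zero (hα : -1 < α) (N : ℕ) :
    (connectionMatrixLimit α N).det ≠ 0 := by
  have hlower : (connectionMatrixLimit α N).IsLowerTriangular :=
    fun k i hki => if_neg (not_le.2 hki)
  rw [Matrix.det_of_isLowerTriangular _ hlower]
  refine Finset.prod_ne_zero_iff.2 fun i _ => ?_
  have hΓ := Real.Gamma_pos_of_pos
    (by linarith [(i : ℕ).cast_nonneg (α := ℝ)] : 0 < α + (i : ℕ) + (i : ℕ) + 1)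
  rw [connectionMatrixLimit, Matrix.of_apply, if_pos le_rfl]
  exact div_ne_zero (pow_ne_zero _ (by norm_num)) (by positivity)

lemma hasPowerLaw_connectionMatrix (hα : -1 < α) (hβ : -1 < β) {N : ℕ} (k i : Fin N) :
    HasPowerLaw (fun n => connectionMatrix α β N n k i) (α + 2 * (k : ℕ))
      (connectionMatrixLimit α N k i) := by
  simp only [connectionMatrix, connectionMatrixLimit, Matrix.of_apply,
    coeff_taylor_one_sub_X_pow_mul, Fin.val_fin_le]
  split_ifs with hik
  · have hik' : (i : ℕ) ≤ k := hik
    have hαi : -1 < α + 2 * (i : ℕ) := by linarith [(i : ℕ).cast_nonneg (α := ℝ)]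
    have h := ((hasPowerLaw_coeff_taylor_jacobiP hαi hβ (k - i)).comp_sub_nat i).const_mul
      ((-1) ^ (i : ℕ))
    push_cast [hik'] at h
    rw [show α + 2 * (i : ℕ) + 2 * ((k : ℕ) - (i : ℕ)) = α + 2 * (k : ℕ) by ring,
      show α + 2 * (i : ℕ) + ((k : ℕ) - (i : ℕ)) + 1 = α + (k : ℕ) + (i : ℕ) + 1 by ring,
      mul_one_div] at h
    exact h
  · simp [HasPowerLaw]

lemma exists_tendsto_connection_coeff (hα : -1 < α) (hβ : -1 < β) {N : ℕ}
    {p : ℕ → ℝ[X]} {b : ℕ → ℕ → ℝ}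
    (hp : ∀ k : ℕ, ∃ c, HasPowerLaw (fun n => (taylor 1 (p n)).coeff k) (α + 2 * k) c)
    (hb : ∀ᶠ n in atTop, p n =
      ∑ i ∈ Finset.range N, C (b n i) * (1 - X) ^ i * jacobiP (α + 2 * i) β (n - i))
    {i : ℕ} (hi : i < N) : ∃ L, Tendsto (fun n => b n i) atTop (𝓝 L) := by
  choose c hc using hp
  let A : ℕ → Matrix (Fin N) (Fin N) ℝ := fun n =>
    .of fun k i => connectionMatrix α β N n k i / (n : ℝ) ^ (α + 2 * (k : ℕ))
  have hA : Tendsto A atTop (𝓝 (connectionMatrixLimit α N)) :=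
    tendsto_pi_nhds.2 fun k => tendsto_pi_nhds.2 fun i => hasPowerLaw_connectionMatrix hα hβ k i
  have hAb : Tendsto (fun n => A n *ᵥ fun i : Fin N => b n i) atTop (𝓝 fun k => c k) := by
    refine tendsto_pi_nhds.2 fun k => Tendsto.congr' ?_ (hc k)
    filter_upwards [hb] with n hn
    rw [hn, ← connectionMatrix_mulVec]
    simp only [A, Matrix.mulVec, dotProduct, Matrix.of_apply, Finset.sum_div, div_mul_eq_mul_div]
  exact ⟨_, tendsto_pi_nhds.1
    (tendsto_of_tendsto_mulVec hA (det_connectionMatrixLimit_ne_zero hα N) hAb) ⟨i, hi⟩⟩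

end Jacobi

/-- the coefficients `b_i(n)` in the connection formula are unique and,
for each `i ∈ {0,…,j+1}`, convergent as `n → ∞`. -/
theorem sobQ_connection_coeffs_unique_and_convergent (α β : ℝ) (hα : -1 < α) (hβ : -1 < β)
    (j : ℕ) (γ M : ℝ) (hM : 0 < M) (Ms : ℕ → ℝ) (hMs : ∀ n, 0 ≤ Ms n)
    (hlim : Filter.Tendsto (fun n : ℕ => Ms n * (n : ℝ) ^ γ) Filter.atTop (nhds M)) :
    (∀ n, j + 1 ≤ n → ∀ b b' : ℕ → ℝ,
      sobQ α β j Ms n =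
        (∑ i ∈ Finset.range (j + 2),
          Polynomial.C (b i) * (1 - Polynomial.X) ^ i * jacobiP (α + 2 * i) β (n - i)) →
      sobQ α β j Ms n =
        (∑ i ∈ Finset.range (j + 2),
          Polynomial.C (b' i) * (1 - Polynomial.X) ^ i * jacobiP (α + 2 * i) β (n - i)) →
      ∀ i, i ≤ j + 1 → b i = b' i) ∧
    ∀ b : ℕ → ℕ → ℝ,
      (∀ n, j + 1 ≤ n →
        sobQ α β j Ms n =
          ∑ i ∈ Finset.range (j + 2),
            Polynomial.C (b n i) * (1 - Polynomial.X) ^ i * jacobiP (α + 2 * i) β (n - i)) →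
      ∀ i, i ≤ j + 1 →
        ∃ L : ℝ, Filter.Tendsto (fun n : ℕ => b n i) Filter.atTop (nhds L) := by
  have hMs_law : HasPowerLaw Ms (-γ) M :=
    hlim.congr fun n => by rw [Real.rpow_neg n.cast_nonneg, div_inv_eq_mul]
  refine ⟨fun n _ b b' hb hb' i hi => ?_, fun b hb i hi => ?_⟩
  · exact connection_coeffs_unique hα hβ (hb.symm.trans hb') (Nat.lt_succ_of_le hi)
  · exact exists_tendsto_connection_coeff hα hβ
      (exists_hasPowerLaw_coeff_taylor_sobQ hα hβ j hMs_law hM)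
      (eventually_atTop.2 ⟨j + 1, hb⟩) (Nat.lt_succ_of_le hi)
end
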